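/- Fix an integer p ≥ 2, and let 𝒩(p) be the set of x ∈ [0,1) that are normal to every base q ≥ 2 with log q / log p irrational but are not normal to base p. Then every real number t ∈ [0,1) can be written as t = u + v (mod 1) with u, v ∈ 𝒩(p) (Pollington: 𝒩(p) + 𝒩(p) = 𝕋). -/

import Mathlib

open Filter MeasureTheory Topology
open scoped Classical

/-- The `(n+1)`-st digit (i.e. `ε_{n+1}`, `0`-indexed by `n`) of the base-`q` expansion of `x`,
chosen as the greedy expansion (never eventually equal to `q - 1`). -/
noncomputable def qdigit (q : ℕ) (x : ℝ) (n : ℕ) : ℕ :=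
  (⌊x * (q : ℝ) ^ (n + 1)⌋).toNat % q

/-- `x` is normal to base `q`: every word `d` of length `m ≥ 1` over `{0, …, q-1}` occurs in the
base-`q` digit sequence of `x` with frequency `q^{-m}`. -/
def IsNormal (q : ℕ) (x : ℝ) : Prop :=
  ∀ m : ℕ, 0 < m → ∀ d : Fin m → ℕ, (∀ i, d i < q) →
    Tendsto
      (fun N : ℕ =>
        (((Finset.range N).filter fun n =>
          ∀ i : Fin m, qdigit q x (n + (i : ℕ)) = d i).card : ℝ) / N)
      atTop (𝓝 (((q : ℝ) ^ m)⁻¹))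

/-- `e x = exp (2 π i x)`. -/
noncomputable def ee (x : ℝ) : ℂ := Complex.exp (2 * Real.pi * Complex.I * x)

lemma ee_norm (x : ℝ) : ‖ee x‖ = 1 := by
  unfold ee
  rw [Complex.norm_exp]; simp

lemma ee_add (x y : ℝ) : ee (x + y) = ee x * ee y := by
  unfold ee; rw [← Complex.exp_add]; push_cast; ring_nf

lemma ee_int (n : ℤ) : ee n = 1 := by
  unfold ee
  rw [Complex.exp_eq_one_iff]; exact ⟨n, by push_cast; ring⟩

lemma ee_zero : ee 0 = 1 := by simpa using ee_int 0

lemma ee_neg (x : ℝ) : ee (-x) = (starRingEnd ℂ) (ee x) := by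
  unfold ee; rw [← Complex.exp_conj]; simp [map_ofNat]

lemma ee_continuous : Continuous ee := by unfold ee; fun_prop

lemma ee_sub_one_le (x : ℝ) : ‖ee x - 1‖ ≤ 2 * Real.pi * |x| := by
  have := Real.norm_exp_I_mul_ofReal_sub_one_le (x := 2 * Real.pi * x)
  unfold ee
  rw [Real.norm_eq_abs, abs_mul, abs_of_pos Real.two_pi_pos] at this
  convert this using 4
  push_cast; ring

lemma avg_norm_le (f : ℕ → ℂ) (c : ℝ) (hc : 0 ≤ c) (hf : ∀ n, ‖f n‖ ≤ c) (N : ℕ) :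
    ‖(∑ n ∈ Finset.range N, f n) / (N : ℂ)‖ ≤ c := by
  rw [norm_div, Complex.norm_natCast]
  apply div_le_of_le_mul₀ (by positivity) hc
  calc _ ≤ ∑ n ∈ Finset.range N, ‖f n‖ := norm_sum_le _ _
    _ ≤ ∑ n ∈ Finset.range N, c := Finset.sum_le_sum fun n _ => hf n
    _ = c * N := by simp [mul_comm]

lemma integral_fourier_zero (h : ℤ) :
    ∫ y : UnitAddCircle, fourier h y = if h = 0 then 1 else 0 := by
  have h1 := fourierCoeff_fourier (T := (1:ℝ)) h
  have h2 := congrFun h1 0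
  rw [fourierCoeff] at h2
  have : (volume : Measure UnitAddCircle) = AddCircle.haarAddCircle := by
    rw [AddCircle.volume_eq_smul_haarAddCircle]; simp
  rw [this]
  simp only [neg_zero, fourier_zero, one_smul] at h2
  rw [h2, Pi.single_apply]
  simp [eq_comm]

lemma weyl_cont (x : ℕ → ℝ)
    (hx : ∀ h : ℤ, h ≠ 0 →
      Tendsto (fun N : ℕ => (∑ n ∈ Finset.range N, ee (h * x n)) / (N : ℂ)) atTop (𝓝 0))
    (F : C(UnitAddCircle, ℂ)) :
    Tendsto (fun N : ℕ => (∑ n ∈ Finset.range N, F (x n : UnitAddCircle)) / (N : ℂ)) atTop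
      (𝓝 (∫ y : UnitAddCircle, F y)) := by
  have hint : ∀ G : C(UnitAddCircle, ℂ), Integrable (fun y => G y) volume := fun G =>
    G.continuous.integrable_of_hasCompactSupport (HasCompactSupport.of_compactSpace _)
  have hspan : ∀ G ∈ Submodule.span ℂ (Set.range (@fourier (1:ℝ))),
      Tendsto (fun N : ℕ => (∑ n ∈ Finset.range N, G (x n : UnitAddCircle)) / (N : ℂ)) atTop
      (𝓝 (∫ y : UnitAddCircle, G y)) := by
    intro G hG
    induction hG using Submodule.span_induction with
    | mem G hG =>
      obtain ⟨h, rfl⟩ := hG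
      rw [integral_fourier_zero]
      by_cases hh : h = 0
      · subst hh
        simp only [if_true, fourier_zero, Finset.sum_const, Finset.card_range, nsmul_eq_mul, mul_one]
        apply tendsto_const_nhds.congr'
        filter_upwards [eventually_gt_atTop 0] with N hN
        rw [div_self]; exact_mod_cast hN.ne'
      · rw [if_neg hh]
        convert hx h hh using 5
        rw [fourier_coe_apply, ee]
        congr 1; push_cast; ring
    | zero => simp
    | add G H _ _ hG hH =>
      have : ∫ y : UnitAddCircle, (G + H) y = (∫ y, G y) + ∫ y, H y := by
        simp only [ContinuousMap.add_apply]
        exact integral_add (hint G) (hint H)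
      rw [this]
      refine (hG.add hH).congr fun N => ?_
      simp only [ContinuousMap.add_apply, Finset.sum_add_distrib, add_div]
    | smul a G _ hG =>
      have : ∫ y : UnitAddCircle, (a • G) y = a * (∫ y, G y) := by
        simp only [ContinuousMap.smul_apply, smul_eq_mul]
        exact integral_const_mul a _
      rw [this]
      refine (hG.const_mul a).congr fun N => ?_
      simp only [ContinuousMap.smul_apply, smul_eq_mul, ← Finset.mul_sum, mul_div_assoc]
  rw [Metric.tendsto_atTop]
  intro ε hε
  have hF : F ∈ closure (Submodule.span ℂ (Set.range (@fourier (1:ℝ))) : Set C(UnitAddCircle, ℂ)) := by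
    have := @span_fourier_closure_eq_top (1:ℝ) _
    rw [← Submodule.topologicalClosure_coe, this]; trivial
  obtain ⟨G, hG, hFG⟩ := Metric.mem_closure_iff.1 hF (ε/4) (by positivity)
  obtain ⟨N0, hN0⟩ := Metric.tendsto_atTop.1 (hspan G hG) (ε/4) (by positivity)
  refine ⟨N0, fun N hN => ?_⟩
  have hpt : ∀ y, ‖F y - G y‖ ≤ ε/4 := fun y => by
    have := ContinuousMap.dist_apply_le_dist (f := F) (g := G) y
    rw [dist_eq_norm] at this; linarith
  have h1 : ‖(∑ n ∈ Finset.range N, F (x n : UnitAddCircle)) / (N : ℂ) -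
      (∑ n ∈ Finset.range N, G (x n : UnitAddCircle)) / (N : ℂ)‖ ≤ ε/4 := by
    rw [← sub_div, ← Finset.sum_sub_distrib]
    exact avg_norm_le _ _ (by positivity) (fun n => hpt _) N
  have h2 : ‖(∫ y : UnitAddCircle, G y) - ∫ y : UnitAddCircle, F y‖ ≤ ε/4 := by
    rw [← integral_sub (hint G) (hint F)]
    have := norm_integral_le_of_norm_le_const (μ := (volume : Measure UnitAddCircle))
      (f := fun y => G y - F y) (C := ε/4) (ae_of_all _ fun y => by rw [norm_sub_rev]; exact hpt y)
    simpa [Measure.real, UnitAddCircle.measure_univ] using this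
  have h3 := hN0 N hN
  rw [dist_eq_norm] at h3 ⊢
  calc _ = ‖((∑ n ∈ Finset.range N, F (x n : UnitAddCircle)) / (N : ℂ) -
      (∑ n ∈ Finset.range N, G (x n : UnitAddCircle)) / (N : ℂ)) +
      ((∑ n ∈ Finset.range N, G (x n : UnitAddCircle)) / (N : ℂ) - ∫ y : UnitAddCircle, G y) +
      ((∫ y : UnitAddCircle, G y) - ∫ y : UnitAddCircle, F y)‖ := by congr 1; ring
    _ ≤ _ := norm_add₃_le
    _ < ε := by linarith

lemma circle_singleton_null (x : UnitAddCircle) : volume ({x} : Set UnitAddCircle) = 0 := by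
  have := AddCircle.volume_closedBall (T := (1:ℝ)) (x := x) 0
  simpa using this

lemma mem_arc_iff {a b : ℝ} (ha : 0 ≤ a) (hb : b ≤ 1) (x : ℝ) :
    (x : UnitAddCircle) ∈ ((fun z : ℝ => (z : UnitAddCircle)) '' Set.Ico a b) ↔
      Int.fract x ∈ Set.Ico a b := by
  have key : ((Int.fract x : ℝ) : UnitAddCircle) = (x : UnitAddCircle) := AddCircle.coe_fract x
  constructor
  · rintro ⟨z, hz, hzx⟩
    have : z = Int.fract x := by
      have h1 : (z : UnitAddCircle) = ((Int.fract x : ℝ) : UnitAddCircle) := by rw [key]; exact hzx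
      exact (AddCircle.coe_eq_coe_iff_of_mem_Ico (a := (0:ℝ)) (p := (1:ℝ))
        ⟨ha.trans hz.1, by linarith [hz.2]⟩
        ⟨Int.fract_nonneg x, by linarith [Int.fract_lt_one x]⟩).1 h1
    rw [← this]; exact hz
  · intro h
    exact ⟨_, h, key⟩

lemma arc_volume {a b : ℝ} (ha : 0 ≤ a) (hb : b ≤ 1) :
    volume ((fun z : ℝ => (z : UnitAddCircle)) '' Set.Ico a b) = ENNReal.ofReal (b - a) := by
  have hsub : ((fun z : ℝ => (z : UnitAddCircle)) '' Set.Ioo a b) ⊆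
      ((fun z : ℝ => (z : UnitAddCircle)) '' Set.Ico a b) :=
    Set.image_mono Set.Ioo_subset_Ico_self
  have hE : ((fun z : ℝ => (z : UnitAddCircle)) '' Set.Ico a b) ⊆
      ((fun z : ℝ => (z : UnitAddCircle)) '' Set.Ioo a b) ∪ {(a : UnitAddCircle)} := by
    rintro _ ⟨z, hz, rfl⟩
    rcases hz.1.eq_or_lt with h | h
    · right; simp [h]
    · left; exact ⟨z, ⟨h, hz.2⟩, rfl⟩
  have hopen : IsOpen ((fun z : ℝ => (z : UnitAddCircle)) '' Set.Ioo a b) :=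
    QuotientAddGroup.isOpenMap_coe _ isOpen_Ioo
  have h1 : volume ((fun z : ℝ => (z : UnitAddCircle)) '' Set.Ioo a b) = ENNReal.ofReal (b - a) := by
    rw [← (UnitAddCircle.measurePreserving_mk 0).measure_preimage hopen.measurableSet.nullMeasurableSet]
    rw [Measure.restrict_apply' measurableSet_Ioc, ← Real.volume_Ioo]
    congr 1
    ext x
    simp only [zero_add, Set.mem_inter_iff, Set.mem_preimage, Set.mem_Ioc]
    constructor
    · rintro ⟨⟨z, hz, hzx⟩, hx⟩
      have := (AddCircle.coe_eq_coe_iff_of_mem_Ioc (a := (0:ℝ)) (p := (1:ℝ)) (x := z) (y := x)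
        ⟨by linarith [hz.1], by linarith [hz.2]⟩ ⟨hx.1, by linarith [hx.2]⟩).1 hzx
      rwa [← this]
    · intro h
      exact ⟨⟨x, h, rfl⟩, by linarith [h.1], by linarith [h.2]⟩
  apply le_antisymm
  · calc _ ≤ _ := measure_mono hE
      _ ≤ _ := measure_union_le _ _
      _ = _ := by rw [circle_singleton_null, h1, add_zero]
  · rw [← h1]; exact measure_mono hsub

lemma arc_frontier {a b : ℝ} :
    volume (frontier ((fun z : ℝ => (z : UnitAddCircle)) '' Set.Ico a b)) = 0 := by
  have hcont : Continuous (fun z : ℝ => (z : UnitAddCircle)) := AddCircle.continuous_mk' 1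
  have hopen : IsOpen ((fun z : ℝ => (z : UnitAddCircle)) '' Set.Ioo a b) :=
    QuotientAddGroup.isOpenMap_coe _ isOpen_Ioo
  have hclosed : IsClosed ((fun z : ℝ => (z : UnitAddCircle)) '' Set.Icc a b) :=
    (isCompact_Icc.image hcont).isClosed
  have h1 := interior_maximal (Set.image_mono (f := (fun z : ℝ => (z : UnitAddCircle)))
    (Set.Ioo_subset_Ico_self (a := a) (b := b))) hopen
  have h2 := closure_minimal (Set.image_mono (f := (fun z : ℝ => (z : UnitAddCircle)))
    (Set.Ico_subset_Icc_self : Set.Ico a b ⊆ Set.Icc a b)) hclosed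
  apply measure_mono_null (t := {(a : UnitAddCircle)} ∪ {(b : UnitAddCircle)})
  · rintro y ⟨hy1, hy2⟩
    obtain ⟨z, hz, rfl⟩ := h2 hy1
    rcases hz.1.eq_or_lt with h | h
    · left; simp [h]
    rcases hz.2.eq_or_lt with h' | h'
    · right; simp [h']
    · exact absurd (h1 ⟨z, ⟨h, h'⟩, rfl⟩) hy2
  · exact measure_union_null (circle_singleton_null _) (circle_singleton_null _)

lemma weyl_interval (x : ℕ → ℝ)
    (hx : ∀ h : ℤ, h ≠ 0 →
      Tendsto (fun N : ℕ => (∑ n ∈ Finset.range N, ee (h * x n)) / (N : ℂ)) atTop (𝓝 0))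
    {a b : ℝ} (ha : 0 ≤ a) (hab : a ≤ b) (hb : b ≤ 1) :
    Tendsto (fun N : ℕ => (((Finset.range N).filter fun n =>
      Int.fract (x n) ∈ Set.Ico a b).card : ℝ) / N) atTop (𝓝 (b - a)) := by
  rw [← tendsto_add_atTop_iff_nat 1]
  let ν : ℕ → Measure UnitAddCircle := fun N =>
    ((N + 1 : ℕ) : ENNReal)⁻¹ • ∑ n ∈ Finset.range (N + 1), Measure.dirac (x n : UnitAddCircle)
  have hν : ∀ N, IsProbabilityMeasure (ν N) := fun N => ⟨by
    simp only [ν, Measure.smul_apply, Measure.finsetSum_apply, measure_univ, Finset.sum_const,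
      Finset.card_range, smul_eq_mul, nsmul_eq_mul, mul_one]
    exact ENNReal.inv_mul_cancel (by simp) (by simp)⟩
  have : IsProbabilityMeasure (volume : Measure UnitAddCircle) := ⟨UnitAddCircle.measure_univ⟩
  let μs : ℕ → ProbabilityMeasure UnitAddCircle := fun N => ⟨ν N, hν N⟩
  let μ : ProbabilityMeasure UnitAddCircle := ⟨volume, inferInstance⟩
  have hlim : Tendsto μs atTop (𝓝 μ) := by
    rw [ProbabilityMeasure.tendsto_iff_forall_integral_rclike_tendsto ℂ]
    intro f
    have h1 := (tendsto_add_atTop_iff_nat 1).2 (weyl_cont x hx f.toContinuousMap)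
    refine h1.congr fun N => ?_
    change _ = ∫ ω, f ω ∂(ν N)
    simp only [ν]
    rw [integral_smul_measure, integral_finsetSum_measure]
    · simp only [integral_dirac]
      rw [div_eq_inv_mul, ENNReal.toReal_inv, ENNReal.toReal_natCast]
      rw [Complex.real_smul]
      push_cast
      rfl
    · intro i _
      exact integrable_dirac (by simp)
  have h2 := ProbabilityMeasure.tendsto_measure_of_null_frontier_of_tendsto' hlim
    (E := (fun z : ℝ => (z : UnitAddCircle)) '' Set.Ico a b) arc_frontier
  have h3 := (ENNReal.tendsto_toReal (by
    change volume _ ≠ _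
    rw [arc_volume ha hb]; simp)).comp h2
  have h4 : ((μ : Measure UnitAddCircle) ((fun z : ℝ => (z : UnitAddCircle)) '' Set.Ico a b)).toReal
      = b - a := by
    change (volume _).toReal = _
    rw [arc_volume ha hb, ENNReal.toReal_ofReal (by linarith)]
  rw [h4] at h3
  refine h3.congr fun N => ?_
  simp only [Function.comp_apply]
  change (ν N _).toReal = _
  have hm : MeasurableSet ((fun z : ℝ => (z : UnitAddCircle)) '' Set.Ico a b) := by
    have hopen : IsOpen ((fun z : ℝ => (z : UnitAddCircle)) '' Set.Ioo a b) :=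
      QuotientAddGroup.isOpenMap_coe _ isOpen_Ioo
    rcases hab.eq_or_lt with h | h
    · simp [h]
    · rw [← Set.Ioo_insert_left h, Set.image_insert_eq]
      exact hopen.measurableSet.insert _
  simp only [ν, Measure.smul_apply, Measure.finsetSum_apply, smul_eq_mul,
    Measure.dirac_apply' _ hm, Set.indicator_apply, mem_arc_iff ha hb]
  rw [ENNReal.toReal_mul, ENNReal.toReal_inv, ENNReal.toReal_natCast, div_eq_inv_mul,
    Finset.card_filter]
  congr 1
  rw [ENNReal.toReal_sum (by intro i _; split_ifs <;> simp)]
  push_cast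
  refine Finset.sum_congr rfl fun i _ => ?_
  split_ifs <;> simp

/-- value of the word `d 0, …, d (m-1)` in base `q` -/
def wordVal (q : ℕ) (d : ℕ → ℕ) : ℕ → ℕ
  | 0 => 0
  | m + 1 => q * wordVal q d m + d m

lemma wordVal_lt (q : ℕ) (d : ℕ → ℕ) (m : ℕ) (hd : ∀ i < m, d i < q) : wordVal q d m < q ^ m := by
  induction m with
  | zero => simp [wordVal]
  | succ m ih =>
    have h1 := ih fun i hi => hd i (by omega)
    have h2 := hd m (by omega)
    rw [wordVal, pow_succ]
    calc q * wordVal q d m + d m < q * wordVal q d m + q := by omega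
      _ = (wordVal q d m + 1) * q := by ring
      _ ≤ q ^ m * q := Nat.mul_le_mul_right _ h1

lemma qdigit_eq (q : ℕ) (x : ℝ) (n : ℕ) : qdigit q x n = ⌊x * (q : ℝ) ^ (n + 1)⌋₊ % q := by
  rw [qdigit, Int.floor_toNat]

lemma floor_succ (q : ℕ) (hq : 0 < q) (x : ℝ) (n : ℕ) :
    ⌊x * (q : ℝ) ^ (n + 1)⌋₊ = q * ⌊x * (q : ℝ) ^ n⌋₊ + qdigit q x n := by
  have h : ⌊x * (q : ℝ) ^ n⌋₊ = ⌊x * (q : ℝ) ^ (n + 1)⌋₊ / q := by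
    rw [← Nat.floor_div_natCast]
    congr 1
    have : (q : ℝ) ≠ 0 := by exact_mod_cast hq.ne'
    field_simp
    ring
  rw [qdigit_eq, h]
  exact (Nat.div_add_mod _ _).symm

lemma word_iff (q : ℕ) (hq : 0 < q) (x : ℝ) (n : ℕ) (d : ℕ → ℕ) (m : ℕ) (hd : ∀ i < m, d i < q) :
    (∀ i < m, qdigit q x (n + i) = d i) ↔
      ⌊x * (q : ℝ) ^ (n + m)⌋₊ = q ^ m * ⌊x * (q : ℝ) ^ n⌋₊ + wordVal q d m := by
  induction m with
  | zero => simp [wordVal]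
  | succ m ih =>
    have ih := ih fun i hi => hd i (by omega)
    have hdm := hd m (by omega)
    have hlt : qdigit q x (n + m) < q := by rw [qdigit]; exact Nat.mod_lt _ hq
    have hs := floor_succ q hq x (n + m)
    rw [← add_assoc, hs, wordVal]
    have hsplit : (∀ i < m + 1, qdigit q x (n + i) = d i) ↔
        (∀ i < m, qdigit q x (n + i) = d i) ∧ qdigit q x (n + m) = d m := by
      constructor
      · intro h; exact ⟨fun i hi => h i (by omega), h m (by omega)⟩
      · rintro ⟨h1, h2⟩ i hi
        rcases Nat.lt_succ_iff_lt_or_eq.1 hi with h | h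
        · exact h1 i h
        · rw [h]; exact h2
    rw [hsplit, ih]
    constructor
    · rintro ⟨h1, h2⟩
      rw [h1, h2]; ring
    · intro h
      have h' : q * ⌊x * (q : ℝ) ^ (n + m)⌋₊ + qdigit q x (n + m) =
        q * (q ^ m * ⌊x * (q : ℝ) ^ n⌋₊ + wordVal q d m) + d m := by rw [h]; ring
      have e1 := congrArg (· % q) h'
      simp only [Nat.mul_add_mod, Nat.mod_eq_of_lt hlt, Nat.mod_eq_of_lt hdm] at e1
      refine ⟨?_, e1⟩
      rw [e1] at h'
      exact Nat.eq_of_mul_eq_mul_left hq (Nat.add_right_cancel h')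

lemma word_iff_fract (q : ℕ) (hq : 0 < q) (x : ℝ) (hx : 0 ≤ x) (n : ℕ) (d : ℕ → ℕ) (m : ℕ)
    (hd : ∀ i < m, d i < q) :
    (∀ i < m, qdigit q x (n + i) = d i) ↔
      Int.fract (x * (q : ℝ) ^ n) ∈
        Set.Ico ((wordVal q d m : ℝ) / q ^ m) (((wordVal q d m : ℝ) + 1) / q ^ m) := by
  rw [word_iff q hq x n d m hd]
  have hq0 : (0 : ℝ) < q := by exact_mod_cast hq
  have hqm : (0 : ℝ) < (q : ℝ) ^ m := by positivity
  have hxq : 0 ≤ x * (q : ℝ) ^ n := by positivity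
  have hfr : Int.fract (x * (q : ℝ) ^ n) = x * (q : ℝ) ^ n - (⌊x * (q : ℝ) ^ n⌋₊ : ℝ) := by
    rw [← Int.self_sub_floor, ← natCast_floor_eq_intCast_floor hxq]
  rw [Nat.floor_eq_iff (by positivity), Set.mem_Ico, div_le_iff₀ hqm, lt_div_iff₀ hqm, hfr, pow_add]
  push_cast
  constructor
  · rintro ⟨h1, h2⟩; constructor <;> nlinarith
  · rintro ⟨h1, h2⟩; constructor <;> nlinarith

lemma isNormal_of_weyl (q : ℕ) (hq : 2 ≤ q) (x : ℝ) (hx : 0 ≤ x)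
    (hw : ∀ h : ℤ, h ≠ 0 →
      Tendsto (fun N : ℕ => (∑ n ∈ Finset.range N, ee (h * (x * (q : ℝ) ^ n))) / (N : ℂ))
        atTop (𝓝 0)) : IsNormal q x := by
  intro m hm d hd
  set d' : ℕ → ℕ := fun i => if h : i < m then d ⟨i, h⟩ else 0 with hd'
  have hdlt : ∀ i < m, d' i < q := fun i hi => by simp [hd', hi, hd]
  have hv : ((wordVal q d' m : ℝ) + 1) ≤ (q : ℝ) ^ m := by
    exact_mod_cast wordVal_lt q d' m hdlt
  have hqm : (0 : ℝ) < (q : ℝ) ^ m := by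
    have : (0 : ℝ) < q := by exact_mod_cast (by omega : 0 < q)
    positivity
  have key := weyl_interval (fun n => x * (q : ℝ) ^ n) hw
    (a := (wordVal q d' m : ℝ) / q ^ m) (b := ((wordVal q d' m : ℝ) + 1) / q ^ m)
    (by positivity) (by gcongr; linarith) ((div_le_one hqm).2 hv)
  rw [show ((wordVal q d' m : ℝ) + 1) / q ^ m - (wordVal q d' m : ℝ) / q ^ m = ((q : ℝ) ^ m)⁻¹ by
    rw [← sub_div]; simp] at key
  refine key.congr fun N => ?_
  congr 3
  ext n
  simp only [Finset.mem_filter]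
  refine and_congr_right fun _ => ?_
  rw [← word_iff_fract q (by omega) x hx n d' m hdlt]
  constructor
  · intro h i
    rw [h i i.2]; simp [hd']
  · intro h i hi
    rw [h ⟨i, hi⟩]; simp [hd', hi]

lemma not_isNormal_of_gap (p : ℕ) (hp : 2 ≤ p) (x : ℝ) (hx : 0 ≤ x)
    (hgap : ∀ j : ℕ, ((p : ℝ) ^ 3)⁻¹ ≤ Int.fract (x * ((p : ℝ) ^ 3) ^ j)) : ¬ IsNormal p x := by
  intro hn
  have h := hn 5 (by norm_num) (fun _ => 0) (fun _ => by omega)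
  have hp0 : (0 : ℝ) < p := by exact_mod_cast (by omega : 0 < p)
  have hz : ∀ n, ¬ ∀ i : Fin 5, qdigit p x (n + (i : ℕ)) = 0 := by
    intro n hall
    have h1 := hgap ((n + 2) / 3)
    have h2 : ∀ i < 3, qdigit p x (3 * ((n + 2) / 3) + i) = (fun _ => 0) i := by
      intro i hi
      have := hall ⟨3 * ((n + 2) / 3) + i - n, by omega⟩
      simp only at this
      rw [show n + (3 * ((n + 2) / 3) + i - n) = 3 * ((n + 2) / 3) + i by omega] at this
      exact this
    rw [word_iff_fract p (by omega) x hx _ (fun _ => 0) 3 (fun _ _ => by omega)] at h2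
    rw [← pow_mul] at h1
    have h3 := h2.2
    simp [wordVal] at h3
    linarith
  have h0 : Tendsto (fun N : ℕ => (((Finset.range N).filter fun n =>
          ∀ i : Fin 5, qdigit p x (n + (i : ℕ)) = 0).card : ℝ) / N) atTop (𝓝 0) := by
    refine tendsto_const_nhds.congr fun N => ?_
    rw [Finset.filter_false_of_mem fun n _ => hz n]; simp
  have := tendsto_nhds_unique h h0
  have : (0 : ℝ) < ((p : ℝ) ^ 5)⁻¹ := by positivity
  linarith

lemma ee_nat_mul (n : ℕ) (x : ℝ) : ee (n * x) = ee x ^ n := by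
  unfold ee; rw [← Complex.exp_nat_mul]; push_cast; ring_nf

lemma ee_ne_one (x : ℝ) (hx : Irrational x) : ee x ≠ 1 := by
  intro h
  unfold ee at h
  rw [Complex.exp_eq_one_iff] at h
  obtain ⟨n, hn⟩ := h
  have hc : (2 * Real.pi * Complex.I : ℂ) ≠ 0 := Complex.two_pi_I_ne_zero
  have : (x : ℂ) = n := by
    apply mul_left_cancel₀ hc; rw [hn]; ring
  have h2 : x = n := by exact_mod_cast this
  exact hx.ne_int n h2

lemma rot_weyl (α β : ℝ) (hα : Irrational α) (h : ℤ) (hh : h ≠ 0) :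
    Tendsto (fun N : ℕ => (∑ n ∈ Finset.range N, ee (h * (n * α + β))) / (N : ℂ)) atTop (𝓝 0) := by
  have hne : ee (h * α) ≠ 1 := ee_ne_one _ (hα.intCast_mul hh)
  have hsum : ∀ N : ℕ, ∑ n ∈ Finset.range N, ee (h * (n * α + β)) =
      ee (h * β) * ((ee (h * α) ^ N - 1) / (ee (h * α) - 1)) := by
    intro N
    rw [← geom_sum_eq hne, Finset.mul_sum]
    refine Finset.sum_congr rfl fun n _ => ?_
    rw [← ee_nat_mul, ← ee_add]; ring_nf
  rw [tendsto_zero_iff_norm_tendsto_zero]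
  have hlim : Tendsto (fun N : ℕ => (2 / ‖ee (h * α) - 1‖) / (N : ℝ)) atTop (𝓝 0) :=
    tendsto_const_div_atTop_nhds_zero_nat _
  refine squeeze_zero (fun _ => norm_nonneg _) (fun N => ?_) hlim
  rw [hsum, norm_div, norm_mul, ee_norm, one_mul, norm_div, Complex.norm_natCast]
  gcongr
  calc _ ≤ ‖ee (h * α) ^ N‖ + ‖(1 : ℂ)‖ := norm_sub_le _ _
    _ = 2 := by rw [norm_pow, ee_norm]; norm_num

/-- The (squared) finite product controlling Fourier coefficients. -/
noncomputable def gK (P K : ℕ) (y : ℝ) : ℝ :=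
  ∏ k ∈ Finset.range K, Real.cos (Real.pi * (y * (P : ℝ) ^ k)) ^ 2

lemma gK_continuous (P K : ℕ) : Continuous (gK P K) := by
  unfold gK; fun_prop

lemma gK_nonneg (P K : ℕ) (y : ℝ) : 0 ≤ gK P K y := by
  unfold gK; positivity

lemma gK_succ (P K : ℕ) (y : ℝ) :
    gK P (K + 1) y = Real.cos (Real.pi * y) ^ 2 * gK P K (P * y) := by
  unfold gK
  rw [Finset.prod_range_succ', mul_comm]
  congr 1
  · simp
  · refine Finset.prod_congr rfl fun k _ => ?_
    rw [pow_succ]; ring_nf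

lemma cos_sq_add_int (x : ℝ) (n : ℤ) : Real.cos (Real.pi * (x + n)) ^ 2 = Real.cos (Real.pi * x) ^ 2 := by
  have : Real.pi * (x + n) = Real.pi * x + n * Real.pi := by ring
  rw [this, Real.cos_add_int_mul_pi, mul_pow]
  rw [← zpow_natCast, ← zpow_mul, mul_comm n, zpow_mul]; simp

lemma gK_periodic (P K : ℕ) : Function.Periodic (gK P K) 1 := by
  intro y
  unfold gK
  refine Finset.prod_congr rfl fun k _ => ?_
  have := cos_sq_add_int (y * (P:ℝ)^k) ((P:ℤ)^k)
  rw [← this]; push_cast; ring_nf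

lemma gK_nat (P K n : ℕ) : gK P K n = 1 := by
  unfold gK
  refine Finset.prod_eq_one fun k _ => ?_
  have := cos_sq_add_int 0 ((n : ℤ) * (P:ℤ)^k)
  push_cast at this
  rw [zero_add] at this
  rw [this]; simp

lemma integral_period_nat (f : ℝ → ℝ) (hf : Continuous f) (hp : Function.Periodic f 1) (n : ℕ) (t : ℝ) :
    ∫ y in t..(t + n), f y = n * ∫ y in (0:ℝ)..1, f y := by
  have := hp.intervalIntegral_add_zsmul_eq n t (fun a b => hf.intervalIntegrable a b)
  have h2 := hp.intervalIntegral_add_eq t 0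
  rw [h2] at this
  simpa using this

lemma integral_gK (P : ℕ) (hP : 2 ≤ P) (K : ℕ) : ∫ y in (0:ℝ)..1, gK P K y = (1/2 : ℝ) ^ K := by
  have hP0 : (P : ℝ) ≠ 0 := by exact_mod_cast (by omega : P ≠ 0)
  induction K with
  | zero => simp [gK]
  | succ K ih =>
    have hc := gK_continuous P K
    have hg : ∫ y in (0:ℝ)..1, gK P K (P * y) = (1/2 : ℝ) ^ K := by
      rw [intervalIntegral.integral_comp_mul_left _ hP0]
      have := integral_period_nat _ hc (gK_periodic P K) P 0
      rw [zero_add] at this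
      rw [mul_zero, mul_one, this, ih, smul_eq_mul]
      field_simp
    -- the oscillating part
    have hJ : ∫ y in (0:ℝ)..1, (ee y * gK P K (P * y) : ℂ) = 0 := by
      set f : ℝ → ℂ := fun y => (ee y * gK P K (P * y) : ℂ) with hf
      have hper : Function.Periodic f 1 := by
        intro y
        have h1 : ee (y + 1) = ee y := by
          rw [ee_add]; have := ee_int 1; simp at this; rw [this, mul_one]
        have h2 : gK P K (P * (y + 1)) = gK P K (P * y) := by
          have := (gK_periodic P K).nat_mul P (P * y)
          rw [mul_one] at this
          rw [mul_add, mul_one, this]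
        simp only [hf, h1, h2]
      have hshift : ∀ y, f (y + 1 / P) = ee (1 / P) * f y := by
        intro y
        have h2 : gK P K (P * (y + 1 / P)) = gK P K (P * y) := by
          rw [mul_add, mul_one_div_cancel hP0, gK_periodic P K]
        simp only [hf, h2, ee_add]; ring
      have e1 : ∫ y in (0:ℝ)..1, f (y + 1 / P) = ∫ y in (0:ℝ)..1, f y := by
        rw [intervalIntegral.integral_comp_add_right]
        have := hper.intervalIntegral_add_eq (1 / P : ℝ) 0
        rw [zero_add] at this ⊢
        rw [← this, add_comm]
      simp only [hshift] at e1
      rw [intervalIntegral.integral_const_mul] at e1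
      have hne : ee (1 / P) ≠ 1 := by
        intro h
        unfold ee at h
        rw [Complex.exp_eq_one_iff] at h
        obtain ⟨n, hn⟩ := h
        have : ((1 / P : ℝ) : ℂ) = n := by
          apply mul_left_cancel₀ Complex.two_pi_I_ne_zero; rw [hn]; ring
        have h2 : (1 / P : ℝ) = n := by exact_mod_cast this
        rw [div_eq_iff hP0] at h2
        have h3 : (1 : ℤ) = n * P := by exact_mod_cast h2
        have h4 : (P : ℤ) ∣ 1 := ⟨n, by rw [h3]; ring⟩
        have := Int.le_of_dvd one_pos h4
        omega
      have : (ee (1 / P) - 1) * ∫ y in (0:ℝ)..1, f y = 0 := by rw [sub_mul, e1]; ring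
      exact (mul_eq_zero.1 this).resolve_left (sub_ne_zero.2 hne)
    have hJr : ∫ y in (0:ℝ)..1, Real.cos (2 * Real.pi * y) * gK P K (P * y) = 0 := by
      have h1 := congrArg Complex.re hJ
      have hint : IntervalIntegrable (fun y => (ee y * gK P K (P * y) : ℂ)) volume 0 1 := by
        apply Continuous.intervalIntegrable
        have := ee_continuous
        fun_prop
      have h2 := Complex.reCLM.intervalIntegral_comp_comm hint
      simp only [Complex.reCLM_apply] at h2
      rw [← h2] at h1
      rw [Complex.zero_re] at h1
      rw [← h1]
      congr 1; ext y
      rw [Complex.re_mul_ofReal]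
      congr 1
      unfold ee
      rw [show (2 * Real.pi * Complex.I * y : ℂ) = ((2 * Real.pi * y : ℝ) : ℂ) * Complex.I by
        push_cast; ring, Complex.exp_ofReal_mul_I_re]
    have hfin : ∀ y, gK P (K+1) y = (1/2 : ℝ) * gK P K (P * y) +
        (1/2) * (Real.cos (2 * Real.pi * y) * gK P K (P * y)) := by
      intro y
      rw [gK_succ, Real.cos_sq]; ring_nf
    simp only [hfin]
    rw [intervalIntegral.integral_add, intervalIntegral.integral_const_mul,
      intervalIntegral.integral_const_mul, hg, hJr, pow_succ]
    · ring
    · apply Continuous.intervalIntegrable; fun_prop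
    · apply Continuous.intervalIntegrable; fun_prop

lemma integral_gK_rpow (P : ℕ) (hP : 2 ≤ P) (K : ℕ) :
    ∫ θ in (0:ℝ)..1, gK P K ((P:ℝ) ^ θ) ≤ ((P : ℝ) - 1) / Real.log P * (1/2 : ℝ) ^ K := by
  have hP1 : (1 : ℝ) < P := by exact_mod_cast (by omega : 1 < P)
  have hP0 : (0 : ℝ) < P := by linarith
  have hlog : 0 < Real.log P := Real.log_pos hP1
  have hc := gK_continuous P K
  have hcr : Continuous fun θ : ℝ => (P:ℝ) ^ θ := Real.continuous_const_rpow hP0.ne'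
  have h1 := intervalIntegral.integral_comp_mul_deriv (a := 0) (b := 1)
    (f := fun θ : ℝ => (P:ℝ) ^ θ) (f' := fun θ : ℝ => (P:ℝ) ^ θ * Real.log P) (g := gK P K)
    (fun θ _ => by simpa using (Real.hasStrictDerivAt_const_rpow hP0 θ).hasDerivAt)
    (by fun_prop) hc
  simp only [Real.rpow_zero, Real.rpow_one, Function.comp_apply] at h1
  have h2 := integral_period_nat _ hc (gK_periodic P K) (P - 1) 1
  rw [integral_gK P hP K, Nat.cast_sub (by omega : 1 ≤ P), Nat.cast_one, add_sub_cancel] at h2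
  rw [h2] at h1
  rw [div_mul_eq_mul_div, le_div_iff₀ hlog, ← h1, ← intervalIntegral.integral_mul_const]
  apply intervalIntegral.integral_mono_on (by norm_num)
  · apply Continuous.intervalIntegrable; fun_prop
  · apply Continuous.intervalIntegrable; fun_prop
  · intro θ hθ
    have : 1 ≤ (P:ℝ) ^ θ := Real.one_le_rpow hP1.le hθ.1
    have hg := gK_nonneg P K ((P:ℝ)^θ)
    rw [← mul_assoc]
    apply mul_le_mul_of_nonneg_right _ hlog.le
    nlinarith

lemma rot_avg (P : ℕ) (hP : 2 ≤ P) (K : ℕ) (α β : ℝ) (hα : Irrational α) :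
    ∃ c : ℝ, c ≤ ((P : ℝ) - 1) / Real.log P * (1/2 : ℝ) ^ K ∧
      Tendsto (fun N : ℕ => (∑ n ∈ Finset.range N, gK P K ((P:ℝ) ^ (Int.fract (n * α + β)))) / (N : ℝ))
        atTop (𝓝 c) := by
  have hP0 : (0 : ℝ) < P := by exact_mod_cast (by omega : 0 < P)
  have hc := gK_continuous P K
  have hcr : Continuous fun θ : ℝ => (P:ℝ) ^ θ := Real.continuous_const_rpow hP0.ne'
  refine ⟨_, integral_gK_rpow P hP K, ?_⟩
  let φ : ℝ → ℂ := fun θ => (gK P K ((P:ℝ) ^ θ) : ℂ)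
  have hφc : Continuous φ := by fun_prop
  have h01 : φ 0 = φ 1 := by
    have h0 := gK_nat P K 1
    have h1 := gK_nat P K P
    simp only [φ, Real.rpow_zero, Real.rpow_one, h1]
    rw [Nat.cast_one] at h0
    rw [h0]
  let F : C(UnitAddCircle, ℂ) := ⟨AddCircle.liftIco 1 0 φ,
    AddCircle.liftIco_zero_continuous h01 hφc.continuousOn⟩
  have hF : ∀ x : ℝ, F (x : UnitAddCircle) = φ (Int.fract x) := by
    intro x
    rw [← AddCircle.coe_fract x]
    exact AddCircle.liftIco_zero_coe_apply (p := (1:ℝ)) (f := φ) ⟨Int.fract_nonneg x, Int.fract_lt_one x⟩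
  have hw := weyl_cont (fun n : ℕ => n * α + β) (rot_weyl α β hα) F
  have hI : ∫ y : UnitAddCircle, F y = ((∫ θ in (0:ℝ)..1, gK P K ((P:ℝ) ^ θ) : ℝ) : ℂ) := by
    rw [← UnitAddCircle.intervalIntegral_preimage 0, zero_add, ← intervalIntegral.integral_ofReal]
    apply intervalIntegral.integral_congr_ae
    have : ∀ᵐ x : ℝ, x ≠ 1 := by simp [ae_iff]
    filter_upwards [this] with x hx hx2
    rw [Set.uIoc_of_le zero_le_one] at hx2
    rw [hF, Int.fract_eq_self.2 ⟨hx2.1.le, lt_of_le_of_ne hx2.2 hx⟩]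
  rw [hI] at hw
  have := (Complex.continuous_re.tendsto _).comp hw
  rw [Complex.ofReal_re] at this
  refine this.congr fun N => ?_
  simp only [Function.comp_apply, hF, φ]
  rw [← Complex.ofReal_sum, ← Complex.ofReal_natCast, ← Complex.ofReal_div, Complex.ofReal_re]

lemma norm_partial_diff {f : ℕ → ℂ} (hf : ∀ n, ‖f n‖ ≤ 2) {a b : ℕ} (hab : a ≤ b) :
    ‖∑ n ∈ Finset.range b, f n‖ ≤ ‖∑ n ∈ Finset.range a, f n‖ + 2 * ((b : ℝ) - a) := by
  rw [← Finset.sum_range_add_sum_Ico _ hab]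
  refine (norm_add_le _ _).trans ?_
  gcongr
  refine (norm_sum_le _ _).trans ?_
  refine (Finset.sum_le_sum fun n _ => hf n).trans ?_
  simp [Nat.cast_sub hab, mul_comm]

lemma fill_squares (f : ℕ → ℂ) (hf : ∀ n, ‖f n‖ ≤ 2)
    (h : Tendsto (fun k : ℕ => ‖∑ n ∈ Finset.range (k ^ 2), f n‖ / (k : ℝ) ^ 2) atTop (𝓝 0)) :
    Tendsto (fun N : ℕ => (∑ n ∈ Finset.range N, f n) / (N : ℂ)) atTop (𝓝 0) := by
  have hs : Tendsto Nat.sqrt atTop atTop := by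
    apply tendsto_atTop.2
    intro b
    filter_upwards [eventually_ge_atTop (b * b)] with N hN
    exact Nat.le_sqrt.2 hN
  have h1 := h.comp hs
  have h2 : Tendsto (fun N : ℕ => 4 / (Nat.sqrt N : ℝ)) atTop (𝓝 0) :=
    (tendsto_const_div_atTop_nhds_zero_nat 4).comp hs
  rw [tendsto_zero_iff_norm_tendsto_zero]
  have h3 := h1.add h2
  rw [add_zero] at h3
  refine squeeze_zero' (Eventually.of_forall fun _ => norm_nonneg _) ?_ h3
  filter_upwards [eventually_ge_atTop 1] with N hN
  simp only [Function.comp_apply]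
  set k := Nat.sqrt N with hk
  have hk1 : 1 ≤ k := Nat.le_sqrt.2 (by omega)
  have hkN : k ^ 2 ≤ N := by rw [pow_two]; exact Nat.sqrt_le N
  have hNk : N ≤ k ^ 2 + 2 * k := by
    have := Nat.sqrt_le_add N
    rw [← hk] at this; nlinarith
  have hkr : (0 : ℝ) < k := by exact_mod_cast hk1
  have e1 := norm_partial_diff hf hkN
  have e2 : (N : ℝ) ≤ k ^ 2 + 2 * k := by exact_mod_cast hNk
  have e3 : (k : ℝ) ^ 2 ≤ N := by exact_mod_cast hkN
  rw [norm_div, Complex.norm_natCast]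
  calc _ ≤ ‖∑ n ∈ Finset.range N, f n‖ / (k : ℝ) ^ 2 := by gcongr
    _ ≤ (‖∑ n ∈ Finset.range (k^2), f n‖ + 4 * k) / (k : ℝ) ^ 2 := by
        gcongr
        push_cast at e1
        linarith
    _ = _ := by field_simp

lemma slln {Ω : Type*} [MeasurableSpace Ω] (μ : Measure Ω) [IsProbabilityMeasure μ]
    (Y : ℕ → Ω → ℂ) (hm : ∀ n, Measurable (Y n)) (hb : ∀ n ω, ‖Y n ω‖ ≤ 2) (C : ℝ)
    (h2 : ∀ N : ℕ, ∫ ω, ‖∑ n ∈ Finset.range N, Y n ω‖ ^ 2 ∂μ ≤ C * N) :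
    ∀ᵐ ω ∂μ, Tendsto (fun N : ℕ => (∑ n ∈ Finset.range N, Y n ω) / (N : ℂ)) atTop (𝓝 0) := by
  have hC : 0 ≤ C := by
    have := h2 1
    have h0 : 0 ≤ ∫ ω, ‖∑ n ∈ Finset.range 1, Y n ω‖ ^ 2 ∂μ := integral_nonneg fun _ => by positivity
    simp at this h0
    linarith
  let f : ℕ → Ω → ℝ := fun k ω => (‖∑ n ∈ Finset.range (k ^ 2), Y n ω‖ / (k : ℝ) ^ 2) ^ 2
  have hfm : ∀ k, Measurable (f k) := fun k => by
    have : Measurable fun ω => ∑ n ∈ Finset.range (k ^ 2), Y n ω :=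
      Finset.measurable_fun_sum _ fun n _ => hm n
    fun_prop
  have hfint : ∀ k, ∫ ω, f k ω ∂μ ≤ C * (1 / (k : ℝ) ^ 2) := by
    intro k
    have := h2 (k ^ 2)
    simp only [f, div_pow]
    rw [integral_div]
    rcases Nat.eq_zero_or_pos k with rfl | hk
    · simp
    have hk' : (0 : ℝ) < k := by exact_mod_cast hk
    rw [div_le_iff₀ (by positivity)]
    refine this.trans (le_of_eq ?_)
    push_cast
    field_simp
  have hfi : ∀ k, Integrable (f k) μ := by
    intro k
    refine Integrable.of_bound (hfm k).aestronglyMeasurable (4 * ((k:ℝ)^2) ^ 2 / ((k:ℝ)^2)^2) (ae_of_all _ fun ω => ?_)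
    have hn : ‖∑ n ∈ Finset.range (k ^ 2), Y n ω‖ ≤ 2 * (k : ℝ) ^ 2 := by
      have := norm_partial_diff (f := fun n => Y n ω) (fun n => hb n ω) (Nat.zero_le (k ^ 2))
      simpa using this
    simp only [f]
    rw [Real.norm_of_nonneg (by positivity), div_pow]
    gcongr
    nlinarith [norm_nonneg (∑ n ∈ Finset.range (k ^ 2), Y n ω)]
  have hsum : ∫⁻ ω, ∑' k, ENNReal.ofReal (f k ω) ∂μ ≠ ⊤ := by
    rw [lintegral_tsum fun k => (hfm k).ennreal_ofReal.aemeasurable]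
    have hle : ∀ k, ∫⁻ ω, ENNReal.ofReal (f k ω) ∂μ ≤ ENNReal.ofReal (C * (1 / (k : ℝ) ^ 2)) := by
      intro k
      rw [← ofReal_integral_eq_lintegral_ofReal (hfi k) (ae_of_all _ fun ω => by simp only [f]; positivity)]
      exact ENNReal.ofReal_le_ofReal (hfint k)
    refine ne_top_of_le_ne_top ?_ (ENNReal.tsum_le_tsum hle)
    have hs : Summable fun k : ℕ => C * (1 / (k : ℝ) ^ 2) :=
      (Real.summable_one_div_nat_pow.2 one_lt_two).mul_left C
    exact hs.tsum_ofReal_ne_top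
  have hae := ae_lt_top' (AEMeasurable.tsum fun k => (hfm k).ennreal_ofReal.aemeasurable) hsum
  filter_upwards [hae] with ω hω
  apply fill_squares _ fun n => hb n ω
  have h0 := ENNReal.tendsto_atTop_zero_of_tsum_ne_top hω.ne
  have h1 := (ENNReal.tendsto_toReal ENNReal.zero_ne_top).comp h0
  have h3 : Tendsto (fun k => f k ω) atTop (𝓝 0) := by
    refine h1.congr fun k => ?_
    simp only [Function.comp_apply]
    exact ENNReal.toReal_ofReal (by simp only [f]; positivity)
  have h4 := (Real.continuous_sqrt.tendsto _).comp h3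
  rw [Real.sqrt_zero] at h4
  refine h4.congr fun k => ?_
  simp only [Function.comp_apply, f]
  exact Real.sqrt_sq (by positivity)

lemma second_moment {Ω : Type*} [MeasurableSpace Ω] (μ : Measure Ω) [IsProbabilityMeasure μ]
    (Y : ℕ → Ω → ℂ) (hm : ∀ n, Measurable (Y n)) (hb : ∀ n ω, ‖Y n ω‖ ≤ 2) (g : ℕ)
    (horth : ∀ n m, n + g ≤ m → ∫ ω, Y n ω * (starRingEnd ℂ) (Y m ω) ∂μ = 0) (N : ℕ) :
    ∫ ω, ‖∑ n ∈ Finset.range N, Y n ω‖ ^ 2 ∂μ ≤ (8 * g) * N := by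
  have hint : ∀ n m, Integrable (fun ω => Y n ω * (starRingEnd ℂ) (Y m ω)) μ := by
    intro n m
    refine Integrable.of_bound (C := 4) ?_ (ae_of_all _ fun ω => ?_)
    · have := hm n; have := hm m
      exact ((hm n).mul (Complex.continuous_conj.measurable.comp (hm m))).aestronglyMeasurable
    · rw [norm_mul, RCLike.norm_conj]
      have := hb n ω; have := hb m ω
      nlinarith [norm_nonneg (Y n ω), norm_nonneg (Y m ω)]
  have horth' : ∀ n m, n + g ≤ m ∨ m + g ≤ n → ∫ ω, Y n ω * (starRingEnd ℂ) (Y m ω) ∂μ = 0 := by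
    intro n m h
    rcases h with h | h
    · exact horth n m h
    · have h1 := congrArg (starRingEnd ℂ) (horth m n h)
      rw [← integral_conj] at h1
      simpa [mul_comm] using h1
  have hbound : ∀ n m, ‖∫ ω, Y n ω * (starRingEnd ℂ) (Y m ω) ∂μ‖ ≤
      if n < m + g ∧ m < n + g then 4 else 0 := by
    intro n m
    split_ifs with h
    · have := norm_integral_le_of_norm_le_const (μ := μ)
        (f := fun ω => Y n ω * (starRingEnd ℂ) (Y m ω)) (C := 4) (ae_of_all _ fun ω => by
          rw [norm_mul, RCLike.norm_conj]
          have := hb n ω; have := hb m ω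
          nlinarith [norm_nonneg (Y n ω), norm_nonneg (Y m ω)])
      simpa using this
    · rw [horth' n m (by omega)]; simp
  have hexp : ((∫ ω, ‖∑ n ∈ Finset.range N, Y n ω‖ ^ 2 ∂μ : ℝ) : ℂ) =
      ∑ n ∈ Finset.range N, ∑ m ∈ Finset.range N, ∫ ω, Y n ω * (starRingEnd ℂ) (Y m ω) ∂μ := by
    rw [← integral_complex_ofReal]
    rw [show (∑ n ∈ Finset.range N, ∑ m ∈ Finset.range N, ∫ ω, Y n ω * (starRingEnd ℂ) (Y m ω) ∂μ) =
      ∫ ω, ∑ n ∈ Finset.range N, ∑ m ∈ Finset.range N, Y n ω * (starRingEnd ℂ) (Y m ω) ∂μ by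
        rw [integral_finsetSum _ fun n _ => integrable_finsetSum _ fun m _ => hint n m]
        refine Finset.sum_congr rfl fun n _ => ?_
        rw [integral_finsetSum _ fun m _ => hint n m]]
    congr 1; ext ω
    push_cast
    rw [← Complex.mul_conj', map_sum, Finset.sum_mul_sum]
  have hcard : ∀ n, ((Finset.range N).filter fun m => n < m + g ∧ m < n + g).card ≤ 2 * g := by
    intro n
    calc _ ≤ (Finset.Ico (n - g) (n + g)).card := by
          apply Finset.card_le_card
          intro m; simp only [Finset.mem_filter, Finset.mem_Ico]; omega
      _ ≤ 2 * g := by simp; omega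
  have hnn : 0 ≤ ∫ ω, ‖∑ n ∈ Finset.range N, Y n ω‖ ^ 2 ∂μ := integral_nonneg fun _ => by positivity
  calc _ = ‖((∫ ω, ‖∑ n ∈ Finset.range N, Y n ω‖ ^ 2 ∂μ : ℝ) : ℂ)‖ := by
        rw [Complex.norm_real, Real.norm_of_nonneg hnn]
    _ ≤ ∑ n ∈ Finset.range N, ∑ m ∈ Finset.range N, if n < m + g ∧ m < n + g then (4:ℝ) else 0 := by
        rw [hexp]
        refine (norm_sum_le _ _).trans (Finset.sum_le_sum fun n _ => ?_)
        exact (norm_sum_le _ _).trans (Finset.sum_le_sum fun m _ => hbound n m)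
    _ ≤ ∑ n ∈ Finset.range N, (8 * g : ℝ) := by
        refine Finset.sum_le_sum fun n _ => ?_
        rw [← Finset.sum_filter, Finset.sum_const, nsmul_eq_mul]
        have : ((((Finset.range N).filter fun m => n < m + g ∧ m < n + g).card : ℕ) : ℝ) ≤ 2 * g := by
          exact_mod_cast hcard n
        linarith
    _ = _ := by simp; ring

/-- fair coin -/
noncomputable def coin : Measure Bool :=
  (2 : ENNReal)⁻¹ • Measure.dirac false + (2 : ENNReal)⁻¹ • Measure.dirac true

instance coin_prob : IsProbabilityMeasure coin := ⟨by
  simp [coin, ENNReal.inv_two_add_inv_two]⟩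

lemma integral_coin (f : Bool → ℂ) : ∫ b, f b ∂coin = (f false + f true) / 2 := by
  have hi : ∀ b, Integrable f ((2 : ENNReal)⁻¹ • Measure.dirac b) := fun b =>
    (integrable_dirac (by simp)).smul_measure (by simp)
  rw [coin, integral_add_measure (hi _) (hi _), integral_smul_measure, integral_smul_measure,
    integral_dirac, integral_dirac]
  simp
  ring

/-- independent fair coin tosses -/
noncomputable def bits : Measure (ℕ → Bool) := Measure.infinitePi (fun _ : ℕ => coin)

instance bits_prob : IsProbabilityMeasure bits := by unfold bits; infer_instance

/-- bit value -/
def bv (b : Bool) : ℝ := if b then 1 else 0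

lemma integral_eval (i : ℕ) (f : Bool → ℂ) : ∫ ω, f (ω i) ∂bits = (f false + f true) / 2 := by
  rw [← integral_coin]
  have h := measurePreserving_eval_infinitePi (fun _ : ℕ => coin) i
  rw [← h.map_eq, integral_map h.measurable.aemeasurable (measurable_of_finite f).aestronglyMeasurable]
  rfl

lemma indep_int (f g : (ℕ → Bool) → ℂ) (S T : Finset ℕ) (hST : Disjoint S T)
    (hf : DependsOn f (S : Set ℕ)) (hg : DependsOn g (T : Set ℕ)) :
    ∫ ω, f ω * g ω ∂bits = (∫ ω, f ω ∂bits) * ∫ ω, g ω ∂bits := by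
  have hind : ProbabilityTheory.iIndepFun (fun (i : ℕ) (ω : ℕ → Bool) => ω i) bits :=
    ProbabilityTheory.iIndepFun_infinitePi (P := fun _ : ℕ => coin) (X := fun _ b => b)
      (fun _ => measurable_id)
  have h := hind.indepFun_finset S T hST (fun i => measurable_pi_apply i)
  let ext : ∀ U : Finset ℕ, (U → Bool) → (ℕ → Bool) := fun U x i =>
    if h : i ∈ U then x ⟨i, h⟩ else false
  have key : ∀ (F : (ℕ → Bool) → ℂ) (U : Finset ℕ), DependsOn F (U : Set ℕ) →
      ∀ ω : ℕ → Bool, F ω = F (ext U fun i : U => ω i) := by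
    intro F U hF ω
    apply hF
    intro i hi
    have : i ∈ U := hi
    simp [ext, this]
  have h2 := h.integral_fun_comp_mul_comp (f := fun x => f (ext S x)) (g := fun x => g (ext T x))
    (measurable_pi_lambda _ fun i => measurable_pi_apply _).aemeasurable
    (measurable_pi_lambda _ fun i => measurable_pi_apply _).aemeasurable
    (measurable_of_finite _).aestronglyMeasurable (measurable_of_finite _).aestronglyMeasurable
  simp only [← key f S hf, ← key g T hg] at h2
  exact h2

/-- Block character. -/
noncomputable def Bl (P : ℕ) (lam : ℝ) (S : Finset ℕ) (ω : ℕ → Bool) : ℂ :=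
  ∏ i ∈ S, ee (lam * (bv (ω i) * (P : ℝ)⁻¹ ^ (i + 1)))

lemma Bl_norm (P : ℕ) (lam : ℝ) (S : Finset ℕ) (ω : ℕ → Bool) : ‖Bl P lam S ω‖ = 1 := by
  unfold Bl; rw [norm_prod]; simp [ee_norm]

lemma Bl_measurable (P : ℕ) (lam : ℝ) (S : Finset ℕ) : Measurable (Bl P lam S) := by
  unfold Bl
  refine Finset.measurable_fun_prod _ fun i _ => ?_
  exact (measurable_of_finite fun b : Bool => ee (lam * (bv b * (P : ℝ)⁻¹ ^ (i + 1)))).comp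
    (measurable_pi_apply i)

lemma Bl_depends (P : ℕ) (lam : ℝ) (S : Finset ℕ) : DependsOn (Bl P lam S) (S : Set ℕ) := by
  intro x y h
  unfold Bl
  refine Finset.prod_congr rfl fun i hi => ?_
  rw [h i hi]

lemma Bl_union (P : ℕ) (lam : ℝ) (S T : Finset ℕ) (h : Disjoint S T) (ω : ℕ → Bool) :
    Bl P lam (S ∪ T) ω = Bl P lam S ω * Bl P lam T ω := by
  unfold Bl; rw [Finset.prod_union h]

lemma Bl_eq_sum (P : ℕ) (lam : ℝ) (S : Finset ℕ) (ω : ℕ → Bool) :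
    Bl P lam S ω = ee (lam * ∑ i ∈ S, bv (ω i) * (P : ℝ)⁻¹ ^ (i + 1)) := by
  unfold Bl
  induction S using Finset.induction_on with
  | empty => simp [ee_zero]
  | insert i S hi ih => rw [Finset.prod_insert hi, Finset.sum_insert hi, mul_add, ee_add, ih]

lemma integral_Bl (P : ℕ) (lam : ℝ) (S : Finset ℕ) :
    ∫ ω, Bl P lam S ω ∂bits = ∏ i ∈ S, (1 + ee (lam * (P : ℝ)⁻¹ ^ (i + 1))) / 2 := by
  induction S using Finset.induction_on with
  | empty => simp [Bl]
  | insert i S hi ih =>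
    rw [Finset.prod_insert hi, ← ih]
    have h1 : ∀ ω, Bl P lam (insert i S) ω = Bl P lam {i} ω * Bl P lam S ω := by
      intro ω; unfold Bl; rw [Finset.prod_insert hi, Finset.prod_singleton]
    simp only [h1]
    rw [indep_int _ _ {i} S (by simpa using hi) (Bl_depends _ _ _) (Bl_depends _ _ _)]
    congr 1
    have := integral_eval i (fun b => ee (lam * (bv b * (P : ℝ)⁻¹ ^ (i + 1))))
    simpa [Bl, bv, ee_zero] using this

lemma half_norm_sq (x : ℝ) : ‖(1 + ee x) / 2‖ ^ 2 = Real.cos (Real.pi * x) ^ 2 := by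
  rw [Real.cos_sq, norm_div, div_pow, ← Complex.normSq_eq_norm_sq, Complex.normSq_apply]
  have h : ee x = ⟨Real.cos (2 * Real.pi * x), Real.sin (2 * Real.pi * x)⟩ := by
    unfold ee
    rw [show (2 * Real.pi * Complex.I * x : ℂ) = ((2 * Real.pi * x : ℝ) : ℂ) * Complex.I by
        push_cast; ring]
    apply Complex.ext
    · rw [Complex.exp_ofReal_mul_I_re]
    · rw [Complex.exp_ofReal_mul_I_im]
  rw [h]
  simp
  have := Real.sin_sq_add_cos_sq (2 * Real.pi * x)
  rw [show 2 * (Real.pi * x) = 2 * Real.pi * x by ring]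
  nlinarith

lemma integral_Bl_le (P : ℕ) (hP : 2 ≤ P) (lam : ℝ) (M K : ℕ) (hKM : K ≤ M) :
    ‖∫ ω, Bl P lam (Finset.Ico (M - K) (M + K)) ω ∂bits‖ ^ 2 ≤ gK P K (|lam| / (P : ℝ) ^ M) := by
  have hP0 : (P : ℝ) ≠ 0 := by exact_mod_cast (by omega : P ≠ 0)
  rw [integral_Bl, norm_prod, ← Finset.prod_pow]
  simp only [half_norm_sq]
  rw [← Finset.prod_Ico_consecutive _ (by omega : M - K ≤ M) (by omega : M ≤ M + K)]
  have h1 : ∏ i ∈ Finset.Ico M (M + K), Real.cos (Real.pi * (lam * (P : ℝ)⁻¹ ^ (i + 1))) ^ 2 ≤ 1 :=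
    Finset.prod_le_one (fun _ _ => by positivity) fun _ _ => Real.cos_sq_le_one _
  refine (mul_le_of_le_one_right (Finset.prod_nonneg fun _ _ => by positivity) h1).trans (le_of_eq ?_)
  rw [Finset.prod_Ico_eq_prod_range, show M - (M - K) = K by omega, ← Finset.prod_range_reflect]
  unfold gK
  refine Finset.prod_congr rfl fun k hk => ?_
  have hk := Finset.mem_range.1 hk
  have e1 : lam * (P : ℝ)⁻¹ ^ (M - K + (K - 1 - k) + 1) = lam / (P:ℝ) ^ M * (P:ℝ)^k := by
    rw [show M - K + (K - 1 - k) + 1 = M - k by omega]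
    have : (P : ℝ) ^ M = (P:ℝ)^(M-k) * (P:ℝ)^k := by rw [← pow_add]; congr 1; omega
    rw [this, inv_pow]
    field_simp
  rw [e1]
  rcases abs_cases lam with h | h
  · rw [h.1]
  · rw [h.1, neg_div, neg_mul, mul_neg, Real.cos_neg]

/-- The random Cantor point. -/
noncomputable def wpt (P : ℕ) (ω : ℕ → Bool) : ℝ := ∑' i, bv (ω i) * (P : ℝ)⁻¹ ^ (i + 1)

lemma bv_bounds (b : Bool) : 0 ≤ bv b ∧ bv b ≤ 1 := by cases b <;> simp [bv]

lemma geom_summable (P : ℕ) (hP : 2 ≤ P) : Summable fun i : ℕ => (P : ℝ)⁻¹ ^ (i + 1) := by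
  have hP0 : (2 : ℝ) ≤ P := by exact_mod_cast hP
  have : Summable fun i : ℕ => (P : ℝ)⁻¹ ^ i :=
    summable_geometric_of_lt_one (by positivity) (inv_lt_one_of_one_lt₀ (by linarith))
  exact (summable_nat_add_iff 1).2 this

lemma wpt_summable (P : ℕ) (hP : 2 ≤ P) (ω : ℕ → Bool) :
    Summable fun i : ℕ => bv (ω i) * (P : ℝ)⁻¹ ^ (i + 1) := by
  refine Summable.of_nonneg_of_le (fun i => ?_) (fun i => ?_) (geom_summable P hP)
  · exact mul_nonneg (bv_bounds _).1 (by positivity)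
  · exact mul_le_of_le_one_left (by positivity) (bv_bounds _).2

lemma wpt_tail (P : ℕ) (hP : 2 ≤ P) (ω : ℕ → Bool) (b : ℕ) :
    |wpt P ω - ∑ i ∈ Finset.range b, bv (ω i) * (P : ℝ)⁻¹ ^ (i + 1)| ≤ (P : ℝ)⁻¹ ^ b := by
  have hP0 : (2 : ℝ) ≤ P := by exact_mod_cast hP
  have hs := wpt_summable P hP ω
  have h1 := hs.sum_add_tsum_nat_add b
  have h2 : wpt P ω - ∑ i ∈ Finset.range b, bv (ω i) * (P : ℝ)⁻¹ ^ (i + 1) =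
      ∑' i, bv (ω (i + b)) * (P : ℝ)⁻¹ ^ (i + b + 1) := by
    unfold wpt; rw [← h1]; ring
  rw [h2, abs_of_nonneg (tsum_nonneg fun i => mul_nonneg (bv_bounds _).1 (by positivity))]
  have hg : HasSum (fun i : ℕ => (P : ℝ)⁻¹ ^ i * (P : ℝ)⁻¹ ^ (b + 1))
      ((1 - (P : ℝ)⁻¹)⁻¹ * (P : ℝ)⁻¹ ^ (b + 1)) :=
    (hasSum_geometric_of_lt_one (by positivity) (inv_lt_one_of_one_lt₀ (by linarith))).mul_right _
  calc _ ≤ ∑' i : ℕ, (P : ℝ)⁻¹ ^ i * (P : ℝ)⁻¹ ^ (b + 1) := by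
        refine Summable.tsum_le_tsum (fun i => ?_) ((summable_nat_add_iff b).2 hs) hg.summable
        rw [← pow_add, show i + (b + 1) = i + b + 1 by ring]
        exact mul_le_of_le_one_left (by positivity) (bv_bounds _).2
    _ = (1 - (P : ℝ)⁻¹)⁻¹ * (P : ℝ)⁻¹ ^ (b + 1) := hg.tsum_eq
    _ = (((P : ℝ)) - 1)⁻¹ * (P : ℝ)⁻¹ ^ b := by
        have : (P : ℝ) - 1 ≠ 0 := by linarith
        rw [pow_succ]; field_simp
    _ ≤ 1 * (P : ℝ)⁻¹ ^ b := by
        gcongr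
        exact inv_le_one_of_one_le₀ (by linarith)
    _ = _ := one_mul _

/-- Centered block differences average to zero almost surely. -/
lemma block_slln (P : ℕ) (c : ℕ → ℂ) (hc : ∀ n, ‖c n‖ = 1) (lam : ℕ → ℝ) (a b : ℕ → ℕ) (g : ℕ)
    (hab : ∀ n, a n ≤ b n)
    (hg : ∀ n m, n + g ≤ m → b n ≤ a m) :
    ∀ᵐ ω ∂bits, Tendsto (fun N : ℕ => (∑ n ∈ Finset.range N,
      c n * Bl P (lam n) (Finset.range (a n)) ω * (Bl P (lam n) (Finset.Ico (a n) (b n)) ω -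
        ∫ ω', Bl P (lam n) (Finset.Ico (a n) (b n)) ω' ∂bits)) / (N : ℂ)) atTop (𝓝 0) := by
  set E : ℕ → ℂ := fun n => ∫ ω', Bl P (lam n) (Finset.Ico (a n) (b n)) ω' ∂bits with hE
  have hEn : ∀ n, ‖E n‖ ≤ 1 := by
    intro n
    have := norm_integral_le_of_norm_le_const (μ := bits)
      (f := Bl P (lam n) (Finset.Ico (a n) (b n))) (C := 1) (ae_of_all _ fun ω => (Bl_norm _ _ _ _).le)
    simpa using this
  let Y : ℕ → (ℕ → Bool) → ℂ := fun n ω =>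
    c n * Bl P (lam n) (Finset.range (a n)) ω * (Bl P (lam n) (Finset.Ico (a n) (b n)) ω - E n)
  have hYm : ∀ n, Measurable (Y n) := fun n => by
    have h1 := Bl_measurable P (lam n) (Finset.range (a n))
    have h2 := Bl_measurable P (lam n) (Finset.Ico (a n) (b n))
    exact (h1.const_mul (c n)).mul (h2.sub_const _)
  have hYb : ∀ n ω, ‖Y n ω‖ ≤ 2 := fun n ω => by
    simp only [Y, norm_mul, hc, Bl_norm, one_mul]
    refine (norm_sub_le _ _).trans ?_
    rw [Bl_norm]; linarith [hEn n]
  apply slln bits Y hYm hYb (8 * g)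
  apply second_moment bits Y hYm hYb g
  intro n m hnm
  have hba := hg n m hnm
  have hsplit : ∀ ω, Y n ω * (starRingEnd ℂ) (Y m ω) =
      (Y n ω * (starRingEnd ℂ) (c m * Bl P (lam m) (Finset.range (a m)) ω)) *
      (starRingEnd ℂ) (Bl P (lam m) (Finset.Ico (a m) (b m)) ω - E m) := by
    intro ω; simp only [Y, map_mul]; ring
  simp only [hsplit]
  rw [indep_int _ _ (Finset.range (a m)) (Finset.Ico (a m) (b m))]
  · have h0 : ∫ ω, (starRingEnd ℂ) (Bl P (lam m) (Finset.Ico (a m) (b m)) ω - E m) ∂bits = 0 := by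
      rw [integral_conj, integral_sub]
      · simp [hE]
      · exact Integrable.of_bound (Bl_measurable _ _ _).aestronglyMeasurable 1
          (ae_of_all _ fun ω => (Bl_norm _ _ _ _).le)
      · exact integrable_const _
    rw [h0, mul_zero]
  · rw [Finset.disjoint_left]
    intro i hi hi2
    simp only [Finset.mem_range, Finset.mem_Ico] at hi hi2
    omega
  · intro x y hxy
    have h1 := Bl_depends P (lam n) (Finset.range (a n)) (x := x) (y := y) fun i hi => hxy i (by
      have := hab n
      simp only [Finset.coe_range, Set.mem_Iio] at hi ⊢; omega)
    have h2 := Bl_depends P (lam n) (Finset.Ico (a n) (b n)) (x := x) (y := y) fun i hi => hxy i (by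
      simp only [Finset.coe_range, Set.mem_Iio, Finset.coe_Ico, Set.mem_Ico] at hi ⊢; omega)
    have h3 := Bl_depends P (lam m) (Finset.range (a m)) (x := x) (y := y) hxy
    simp only [Y, h1, h2, h3]
  · intro x y hxy
    have h3 := Bl_depends P (lam m) (Finset.Ico (a m) (b m)) (x := x) (y := y) hxy
    simp only [h3]

lemma main_ae (P : ℕ) (hP : 2 ≤ P) (q : ℕ) (hq : 2 ≤ q)
    (hirr : Irrational (Real.log q / Real.log P)) (h : ℤ) (hh : h ≠ 0)
    (c : ℕ → ℂ) (hc : ∀ n, ‖c n‖ = 1) :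
    ∀ᵐ ω ∂bits, Tendsto (fun N : ℕ => (∑ n ∈ Finset.range N,
      c n * ee ((h * (q : ℝ) ^ n) * wpt P ω)) / (N : ℂ)) atTop (𝓝 0) := by
  have hP1 : (1 : ℝ) < P := by exact_mod_cast (by omega : 1 < P)
  have hP0 : (0 : ℝ) < P := by linarith
  have hq1 : (1 : ℝ) < q := by exact_mod_cast (by omega : 1 < q)
  have hlP : 0 < Real.log P := Real.log_pos hP1
  have hlq : 0 < Real.log q := Real.log_pos hq1
  have hh1 : (1 : ℝ) ≤ |(h : ℝ)| := by
    have := Int.one_le_abs hh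
    exact_mod_cast this
  set α : ℝ := Real.log q / Real.log P with hα
  set β : ℝ := Real.log |(h : ℝ)| / Real.log P with hβ
  have hα0 : 0 < α := by positivity
  have hβ0 : 0 ≤ β := div_nonneg (Real.log_nonneg hh1) hlP.le
  set M : ℕ → ℕ := fun n => ⌊n * α + β⌋₊ with hM
  set lam : ℕ → ℝ := fun n => h * (q : ℝ) ^ n with hlam
  have hnn : ∀ n : ℕ, 0 ≤ n * α + β := fun n => by positivity
  have hfr : ∀ n : ℕ, (n * α + β) = M n + Int.fract (n * α + β) := fun n => by
    rw [← Int.self_sub_floor, ← natCast_floor_eq_intCast_floor (hnn n)]; ring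
  have hpow : ∀ n : ℕ, |lam n| = (P : ℝ) ^ (n * α + β) := fun n => by
    rw [Real.rpow_def_of_pos hP0, hα, hβ]
    rw [show Real.log P * (n * (Real.log q / Real.log P) + Real.log |(h : ℝ)| / Real.log P) =
      Real.log |(h:ℝ)| + n * Real.log q by field_simp; ring]
    rw [Real.exp_add, Real.exp_log (by linarith), ← Real.log_pow, Real.exp_log (by positivity)]
    simp [hlam, abs_mul]
  have hlamM : ∀ n, |lam n| / (P : ℝ) ^ (M n) = (P : ℝ) ^ (Int.fract (n * α + β)) := fun n => by
    rw [hpow]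
    conv_lhs => rw [hfr n]
    rw [Real.rpow_add hP0, Real.rpow_natCast]
    field_simp
  have hlamle : ∀ n, |lam n| ≤ (P : ℝ) ^ (M n) * P := fun n => by
    have h1 : (P : ℝ) ^ (Int.fract (n * α + β)) ≤ P := by
      calc _ ≤ (P : ℝ) ^ (1 : ℝ) := Real.rpow_le_rpow_of_exponent_le hP1.le (Int.fract_lt_one _).le
        _ = P := Real.rpow_one _
    rw [← hlamM, div_le_iff₀ (by positivity)] at h1
    linarith
  have hae : ∀ᵐ ω ∂bits, ∀ K : ℕ, Tendsto (fun N : ℕ => (∑ n ∈ Finset.range N,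
      c n * Bl P (lam n) (Finset.range (M n - K)) ω * (Bl P (lam n) (Finset.Ico (M n - K) (M n + K)) ω -
        ∫ ω', Bl P (lam n) (Finset.Ico (M n - K) (M n + K)) ω' ∂bits)) / (N : ℂ)) atTop (𝓝 0) := by
    rw [ae_all_iff]
    intro K
    obtain ⟨g, hg⟩ := exists_nat_ge ((2 * K : ℝ) / α)
    rw [div_le_iff₀ hα0] at hg
    refine block_slln P c hc lam (fun n => M n - K) (fun n => M n + K) g (fun n => by omega) ?_
    intro n m hnm
    have : M n + 2 * K ≤ M m := by
      simp only [hM]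
      rw [← Nat.floor_add_natCast (hnn n)]
      apply Nat.floor_le_floor
      have : (n : ℝ) + g ≤ m := by exact_mod_cast hnm
      push_cast
      nlinarith
    omega
  filter_upwards [hae] with ω hω
  rw [tendsto_zero_iff_norm_tendsto_zero]
  set C : ℝ := ((P : ℝ) - 1) / Real.log P with hC
  have hlimk : Tendsto (fun k : ℕ => (1/2 : ℝ) ^ k + C * (1/2 : ℝ) ^ k + 2 * Real.pi * P * ((P:ℝ)⁻¹ ^ 2) ^ k)
      atTop (𝓝 0) := by
    have h1 : Tendsto (fun k : ℕ => (1/2 : ℝ) ^ k) atTop (𝓝 0) :=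
      tendsto_pow_atTop_nhds_zero_of_lt_one (by norm_num) (by norm_num)
    have h2 : Tendsto (fun k : ℕ => ((P:ℝ)⁻¹ ^ 2) ^ k) atTop (𝓝 0) :=
      tendsto_pow_atTop_nhds_zero_of_lt_one (by positivity)
        (pow_lt_one₀ (by positivity) (inv_lt_one_of_one_lt₀ hP1) (by norm_num))
    simpa using (h1.add (h1.const_mul C)).add (h2.const_mul (2 * Real.pi * P))
  rw [Metric.tendsto_atTop']
  intro ε hε
  obtain ⟨k, hk⟩ := (hlimk.eventually (gt_mem_nhds hε)).exists
  set K := 2 * k with hK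
  set η : ℝ := (1/2 : ℝ) ^ k with hη
  have hη0 : 0 < η := by positivity
  obtain ⟨cc, hcc, hcclim⟩ := rot_avg P hP K α β hirr
  obtain ⟨n0, hn0⟩ := exists_nat_ge ((K : ℝ) / α)
  rw [div_le_iff₀ hα0] at hn0
  have hMK : ∀ n, n0 ≤ n → K ≤ M n := by
    intro n hn
    apply Nat.le_floor
    have : (n0 : ℝ) ≤ n := by exact_mod_cast hn
    nlinarith
  set E : ℕ → ℂ := fun n => ∫ ω', Bl P (lam n) (Finset.Ico (M n - K) (M n + K)) ω' ∂bits with hE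
  have hEn : ∀ n, ‖E n‖ ≤ 1 := by
    intro n
    have := norm_integral_le_of_norm_le_const (μ := bits)
      (f := Bl P (lam n) (Finset.Ico (M n - K) (M n + K))) (C := 1)
      (ae_of_all _ fun ω => (Bl_norm _ _ _ _).le)
    simpa using this
  let G : ℕ → ℝ := fun n => gK P K ((P:ℝ) ^ (Int.fract (n * α + β)))
  have hG0 : ∀ n, 0 ≤ G n := fun n => gK_nonneg _ _ _
  have hEG : ∀ n, ‖E n‖ ≤ (if n < n0 then 1 else 0) + (η + G n / η) := by
    intro n
    have hpos : 0 ≤ G n / η := div_nonneg (hG0 n) hη0.le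
    split_ifs with hn
    · linarith [hEn n]
    · have h1 := integral_Bl_le P hP (lam n) (M n) K (hMK n (by omega))
      rw [hlamM] at h1
      change ‖E n‖ ^ 2 ≤ G n at h1
      rw [zero_add]
      by_cases hle : ‖E n‖ ≤ η
      · linarith
      · push Not at hle
        have : ‖E n‖ ≤ G n / η := by
          rw [le_div_iff₀ hη0]
          nlinarith [norm_nonneg (E n)]
        linarith
  set δ : ℝ := 2 * Real.pi * P * ((P:ℝ)⁻¹ ^ 2) ^ k with hδ
  -- pointwise decomposition
  let Y : ℕ → ℂ := fun n => c n * Bl P (lam n) (Finset.range (M n - K)) ω *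
    (Bl P (lam n) (Finset.Ico (M n - K) (M n + K)) ω - E n)
  have hdec : ∀ n, ‖c n * ee ((h * (q : ℝ) ^ n) * wpt P ω) - Y n‖ ≤
      δ + ((if n < n0 then 1 else 0) + (η + G n / η)) := by
    intro n
    have hX : c n * Bl P (lam n) (Finset.range (M n + K)) ω - Y n =
        c n * Bl P (lam n) (Finset.range (M n - K)) ω * E n := by
      have hun : Finset.range (M n + K) = Finset.range (M n - K) ∪ Finset.Ico (M n - K) (M n + K) := by
        ext i; simp only [Finset.mem_union, Finset.mem_range, Finset.mem_Ico]; omega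
      have hdis : Disjoint (Finset.range (M n - K)) (Finset.Ico (M n - K) (M n + K)) := by
        rw [Finset.disjoint_left]
        intro i hi hi2
        simp only [Finset.mem_range, Finset.mem_Ico] at hi hi2
        omega
      rw [hun, Bl_union _ _ _ _ hdis]
      simp only [Y]; ring
    have htr : ‖c n * ee ((h * (q : ℝ) ^ n) * wpt P ω) - c n * Bl P (lam n) (Finset.range (M n + K)) ω‖
        ≤ δ := by
      set s := ∑ i ∈ Finset.range (M n + K), bv (ω i) * (P : ℝ)⁻¹ ^ (i + 1) with hs
      have e1 : c n * ee ((h * (q : ℝ) ^ n) * wpt P ω) - c n * Bl P (lam n) (Finset.range (M n + K)) ω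
          = c n * ee (lam n * s) * (ee (lam n * (wpt P ω - s)) - 1) := by
        have e0 : ee (lam n * wpt P ω) = ee (lam n * s) * ee (lam n * (wpt P ω - s)) := by
          rw [← ee_add]; ring_nf
        change c n * ee (lam n * wpt P ω) - _ = _
        rw [Bl_eq_sum, ← hs, e0]; ring
      rw [e1, norm_mul, norm_mul, hc, ee_norm, one_mul, one_mul]
      refine (ee_sub_one_le _).trans ?_
      rw [abs_mul]
      have e2 := wpt_tail P hP ω (M n + K)
      have e3 := hlamle n
      calc 2 * Real.pi * (|lam n| * |wpt P ω - s|)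
          ≤ 2 * Real.pi * (((P : ℝ) ^ (M n) * P) * (P : ℝ)⁻¹ ^ (M n + K)) := by
            have := Real.pi_pos
            gcongr
        _ = δ := by
            rw [hδ, ← pow_mul, ← hK, pow_add, inv_pow, inv_pow]
            field_simp
    calc _ = ‖(c n * ee ((h * (q : ℝ) ^ n) * wpt P ω) - c n * Bl P (lam n) (Finset.range (M n + K)) ω)
          + c n * Bl P (lam n) (Finset.range (M n - K)) ω * E n‖ := by rw [← hX]; congr 1; ring
      _ ≤ _ := norm_add_le _ _
      _ ≤ _ := by
        gcongr
        rw [norm_mul, norm_mul, hc, Bl_norm, one_mul, one_mul]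
        exact hEG n
  -- upper bound
  let U : ℕ → ℝ := fun N => ‖(∑ n ∈ Finset.range N, Y n) / (N : ℂ)‖ + (δ + η + (n0 : ℝ) / N +
    ((∑ n ∈ Finset.range N, G n) / (N : ℝ)) / η)
  have hU : Tendsto U atTop (𝓝 (0 + (δ + η + 0 + cc / η))) := by
    refine ((tendsto_zero_iff_norm_tendsto_zero.1 (hω K)).add ?_)
    exact (tendsto_const_nhds.add (tendsto_const_div_atTop_nhds_zero_nat _)).add (hcclim.div_const η)
  have hUε : 0 + (δ + η + 0 + cc / η) < ε := by
    have : cc / η ≤ C * η := by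
      rw [div_le_iff₀ hη0]
      calc cc ≤ C * (1/2 : ℝ) ^ K := hcc
        _ = C * η * η := by rw [hK, hη, pow_mul']; ring
    linarith
  have hev := hU.eventually (gt_mem_nhds hUε)
  rw [eventually_atTop] at hev
  obtain ⟨N1, hN1⟩ := hev
  refine ⟨N1 + 1, fun N hN => ?_⟩
  rw [dist_zero_right, norm_norm]
  refine lt_of_le_of_lt ?_ (hN1 N (by omega))
  have hNpos : (0 : ℝ) < N := by exact_mod_cast (by omega : 0 < N)
  have hsumle : ‖(∑ n ∈ Finset.range N, c n * ee ((h * (q : ℝ) ^ n) * wpt P ω))‖ ≤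
      ‖∑ n ∈ Finset.range N, Y n‖ + (N * δ + (n0 + (N * η + (∑ n ∈ Finset.range N, G n) / η))) := by
    calc _ = ‖(∑ n ∈ Finset.range N, Y n) +
          ∑ n ∈ Finset.range N, (c n * ee ((h * (q : ℝ) ^ n) * wpt P ω) - Y n)‖ := by
            rw [Finset.sum_sub_distrib]; congr 1; ring
      _ ≤ _ := norm_add_le _ _
      _ ≤ ‖∑ n ∈ Finset.range N, Y n‖ + ∑ n ∈ Finset.range N,
          (δ + ((if n < n0 then 1 else 0) + (η + G n / η))) := by
            gcongr
            exact (norm_sum_le _ _).trans (Finset.sum_le_sum fun n _ => hdec n)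
      _ ≤ _ := by
            rw [Finset.sum_add_distrib, Finset.sum_add_distrib, Finset.sum_add_distrib,
              Finset.sum_const, Finset.sum_const, Finset.card_range, nsmul_eq_mul, nsmul_eq_mul,
              ← Finset.sum_div]
            gcongr
            rw [← Finset.sum_filter, Finset.sum_const, nsmul_eq_mul, mul_one]
            have : ((Finset.range N).filter fun n => n < n0).card ≤ n0 := by
              calc _ ≤ (Finset.range n0).card := Finset.card_le_card (by
                    intro i; simp only [Finset.mem_filter, Finset.mem_range]; exact fun h => h.2)
                _ = n0 := Finset.card_range _
            exact_mod_cast this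
  simp only [U]
  rw [norm_div, norm_div, Complex.norm_natCast]
  calc _ ≤ (‖∑ n ∈ Finset.range N, Y n‖ + (N * δ + (n0 + (N * η + (∑ n ∈ Finset.range N, G n) / η)))) / N := by
        gcongr
    _ = _ := by field_simp; ring

/-- the real number with digits `d` in base `P` -/
noncomputable def dser (P : ℕ) (d : ℕ → ℝ) : ℝ := ∑' i, d i * (P : ℝ)⁻¹ ^ (i + 1)

lemma dser_summable (P : ℕ) (hP : 8 ≤ P) (d : ℕ → ℝ) (h0 : ∀ i, 0 ≤ d i) (h6 : ∀ i, d i ≤ 6) :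
    Summable fun i => d i * (P : ℝ)⁻¹ ^ (i + 1) := by
  have hP' : (8 : ℝ) ≤ P := by exact_mod_cast hP
  have hi : (P : ℝ)⁻¹ < 1 := inv_lt_one_of_one_lt₀ (by linarith)
  have hi0 : 0 ≤ (P : ℝ)⁻¹ := by positivity
  have hg : Summable fun i : ℕ => 6 * (P : ℝ)⁻¹ ^ i :=
    (summable_geometric_of_lt_one hi0 hi).mul_left 6
  refine Summable.of_nonneg_of_le (fun i => mul_nonneg (h0 i) (by positivity)) (fun i => ?_) hg
  have : (P : ℝ)⁻¹ ^ (i + 1) ≤ (P : ℝ)⁻¹ ^ i := pow_le_pow_of_le_one hi0 hi.le (by omega)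
  have := h6 i
  have := h0 i
  gcongr

lemma dser_succ (P : ℕ) (hP : 8 ≤ P) (d : ℕ → ℝ) (h0 : ∀ i, 0 ≤ d i) (h6 : ∀ i, d i ≤ 6) :
    P * dser P d = d 0 + dser P (fun i => d (i + 1)) := by
  have hP' : (8 : ℝ) ≤ P := by exact_mod_cast hP
  have hs := dser_summable P hP d h0 h6
  unfold dser
  rw [hs.tsum_eq_zero_add, mul_add, ← tsum_mul_left]
  congr 1
  · rw [zero_add, pow_one]; field_simp
  · refine tsum_congr fun i => ?_
    rw [pow_succ _ (i + 1)]
    field_simp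

lemma dser_nonneg (P : ℕ) (d : ℕ → ℝ) (h0 : ∀ i, 0 ≤ d i) : 0 ≤ dser P d :=
  tsum_nonneg fun i => mul_nonneg (h0 i) (by positivity)

lemma dser_lt_one (P : ℕ) (hP : 8 ≤ P) (d : ℕ → ℝ) (h0 : ∀ i, 0 ≤ d i) (h6 : ∀ i, d i ≤ 6) :
    dser P d < 1 := by
  have hP' : (8 : ℝ) ≤ P := by exact_mod_cast hP
  have hi : (P : ℝ)⁻¹ < 1 := inv_lt_one_of_one_lt₀ (by linarith)
  have hi0 : 0 ≤ (P : ℝ)⁻¹ := by positivity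
  have hs := dser_summable P hP d h0 h6
  have hs6 := dser_summable P hP (fun _ => 6) (fun _ => by norm_num) (fun _ => le_rfl)
  have h1 : dser P d ≤ dser P (fun _ => 6) :=
    hs.tsum_le_tsum (fun i => mul_le_mul_of_nonneg_right (h6 i) (by positivity)) hs6
  have h2 := dser_succ P hP (fun _ => 6) (fun _ => by norm_num) (fun _ => le_rfl)
  have h3 : 0 ≤ dser P (fun _ => 6) := dser_nonneg P _ fun _ => by norm_num
  simp only at h2
  nlinarith

lemma dser_shift (P : ℕ) (hP : 8 ≤ P) (d : ℕ → ℕ) (h6 : ∀ i, d i ≤ 6) (j : ℕ) :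
    ∃ m : ℤ, dser P (fun i => d i) * (P : ℝ) ^ j = m + dser P (fun i => d (i + j)) := by
  induction j with
  | zero => exact ⟨0, by simp⟩
  | succ j ih =>
    obtain ⟨m, hm⟩ := ih
    have h := dser_succ P hP (fun i => (d (i + j) : ℝ)) (fun i => by positivity)
      (fun i => by exact_mod_cast h6 _)
    refine ⟨m * P + d j, ?_⟩
    rw [pow_succ, ← mul_assoc, hm, add_mul, mul_comm (dser _ _), h]
    push_cast
    have e : (fun i => (d (i + 1 + j) : ℝ)) = fun i => (d (i + (j + 1)) : ℝ) := by
      funext i; rw [add_assoc, add_comm 1 j]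
    rw [e, zero_add, add_assoc]

lemma dser_bounds (P : ℕ) (hP : 8 ≤ P) (d : ℕ → ℕ) (h6 : ∀ i, d i ≤ 6) (j : ℕ) :
    (d j : ℝ) ≤ P * dser P (fun i => d (i + j)) ∧ P * dser P (fun i => d (i + j)) < d j + 1 := by
  have h := dser_succ P hP (fun i => (d (i + j) : ℝ)) (fun i => by positivity)
      (fun i => by exact_mod_cast h6 _)
  have h0 := dser_nonneg P (fun i => (d (i + 1 + j) : ℝ)) (fun i => by positivity)
  have h1 := dser_lt_one P hP (fun i => (d (i + 1 + j) : ℝ)) (fun i => by positivity)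
      (fun i => by exact_mod_cast h6 _)
  simp only [zero_add] at h
  constructor <;> linarith

/-- both gap conditions -/
lemma gap_u (P : ℕ) (hP : 8 ≤ P) (d : ℕ → ℕ) (h6 : ∀ i, d i ≤ 6) (h1 : ∀ i, 1 ≤ d i) (j : ℕ)
    (u : ℝ) (k : ℤ) (hu : u = dser P (fun i => d i) + k) :
    (P : ℝ)⁻¹ ≤ Int.fract (u * (P : ℝ) ^ j) := by
  have hP' : (8 : ℝ) ≤ P := by exact_mod_cast hP
  obtain ⟨m, hm⟩ := dser_shift P hP d h6 j
  obtain ⟨b1, b2⟩ := dser_bounds P hP d h6 j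
  have hl := dser_lt_one P hP (fun i => (d (i + j) : ℝ)) (fun i => by positivity)
      (fun i => by exact_mod_cast h6 _)
  have h0 := dser_nonneg P (fun i => (d (i + j) : ℝ)) (fun i => by positivity)
  have e : u * (P : ℝ) ^ j = dser P (fun i => d (i + j)) + ((m + k * P ^ j : ℤ) : ℝ) := by
    rw [hu, add_mul, hm]; push_cast; ring
  rw [e, Int.fract_add_intCast, Int.fract_eq_self.2 ⟨h0, hl⟩]
  have : (1 : ℝ) ≤ d j := by exact_mod_cast h1 j
  rw [inv_le_iff_one_le_mul₀ (by linarith)]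
  linarith

lemma gap_v (P : ℕ) (hP : 8 ≤ P) (t : ℝ) (d : ℕ → ℕ) (h6 : ∀ i, d i ≤ 6)
    (hd : ∀ j, (d j : ℤ) + 2 ≤ ⌊P * Int.fract (t * (P : ℝ) ^ j)⌋ ∨
      ⌊P * Int.fract (t * (P : ℝ) ^ j)⌋ + 1 ≤ (d j : ℤ)) (j : ℕ)
    (v : ℝ) (k : ℤ) (hv : v = t - dser P (fun i => d i) + k) :
    (P : ℝ)⁻¹ ≤ Int.fract (v * (P : ℝ) ^ j) := by
  have hP' : (8 : ℝ) ≤ P := by exact_mod_cast hP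
  have hP0 : (0 : ℝ) < P := by linarith
  obtain ⟨m, hm⟩ := dser_shift P hP d h6 j
  obtain ⟨b1, b2⟩ := dser_bounds P hP d h6 j
  have hl := dser_lt_one P hP (fun i => (d (i + j) : ℝ)) (fun i => by positivity)
      (fun i => by exact_mod_cast h6 _)
  have h0 := dser_nonneg P (fun i => (d (i + j) : ℝ)) (fun i => by positivity)
  set r := dser P (fun i => (d (i + j) : ℝ)) with hr
  set τ := Int.fract (t * (P : ℝ) ^ j) with hτ
  have t0 : 0 ≤ τ := Int.fract_nonneg _
  have t1 : τ < 1 := Int.fract_lt_one _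
  have f1 := Int.floor_le (P * τ)
  have f2 := Int.lt_floor_add_one (P * τ)
  have ht : t * (P : ℝ) ^ j = τ + ⌊t * (P : ℝ) ^ j⌋ := (Int.fract_add_floor _).symm
  have e : v * (P : ℝ) ^ j = (τ - r) + ((⌊t * (P : ℝ) ^ j⌋ - m + k * P ^ j : ℤ) : ℝ) := by
    rw [hv, add_mul, sub_mul, hm]; push_cast; linarith
  rw [e, Int.fract_add_intCast, inv_le_iff_one_le_mul₀ hP0]
  have h6' : (d j : ℝ) ≤ 6 := by exact_mod_cast h6 j
  rcases hd j with h | h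
  · have h' : (d j : ℝ) + 2 ≤ ⌊P * τ⌋ := by rw [hτ]; exact_mod_cast (Int.cast_le (R := ℝ)).2 h
    have hpos : 1 ≤ P * (τ - r) := by linarith
    have : 0 ≤ τ - r := by
      by_contra hc
      push Not at hc
      nlinarith
    rw [Int.fract_eq_self.2 ⟨this, by linarith⟩]
    linarith
  · have h' : (⌊P * τ⌋ : ℝ) + 1 ≤ d j := by rw [hτ]; exact_mod_cast (Int.cast_le (R := ℝ)).2 h
    have hneg : P * (τ - r) < 0 := by linarith
    have hn : τ - r < 0 := by
      by_contra hc
      push Not at hc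
      nlinarith
    have e2 : Int.fract (τ - r) = τ - r + 1 := by
      rw [Int.fract_eq_iff]
      exact ⟨by linarith, by linarith, -1, by push_cast; ring⟩
    rw [e2]
    nlinarith

lemma weyl_of_main (q : ℕ) (s w x : ℝ) (ε : ℤ) (k : ℤ) (hx : x = s + ε * w + k) (h : ℤ)
    (hm : Tendsto (fun N : ℕ => (∑ n ∈ Finset.range N, ee (h * s * (q : ℝ) ^ n) *
      ee (((h * ε : ℤ) * (q : ℝ) ^ n) * w)) / (N : ℂ)) atTop (𝓝 0)) :
    Tendsto (fun N : ℕ => (∑ n ∈ Finset.range N, ee (h * (x * (q : ℝ) ^ n))) / (N : ℂ))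
      atTop (𝓝 0) := by
  refine hm.congr fun N => ?_
  congr 1
  refine Finset.sum_congr rfl fun n _ => ?_
  have : (h : ℝ) * (x * (q : ℝ) ^ n) = h * s * (q : ℝ) ^ n + ((h * ε : ℤ) * (q : ℝ) ^ n) * w +
      ((h * k * q ^ n : ℤ) : ℝ) := by
    rw [hx]; push_cast; ring
  rw [this, ee_add, ee_add, ee_int, mul_one]

/-- **Pollington**: for `p ≥ 2`, let `𝒩(p)` be the set of `x ∈ [0,1)` normal to every base
`q ≥ 2` with `log q / log p` irrational, but not normal to base `p`.  Then every `t ∈ [0,1)`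
is a sum mod 1 of two elements of `𝒩(p)`. -/
theorem pollington_sum_of_two (p : ℕ) (hp : 2 ≤ p) (Np : Set ℝ)
    (hNp : Np = {x : ℝ | x ∈ Set.Ico (0 : ℝ) 1 ∧
      (∀ q : ℕ, 2 ≤ q → Irrational (Real.log q / Real.log p) → IsNormal q x) ∧
      ¬ IsNormal p x}) :
    ∀ t ∈ Set.Ico (0 : ℝ) 1, ∃ u ∈ Np, ∃ v ∈ Np, Int.fract (u + v) = t := by
  intro t ht
  subst hNp
  set P : ℕ := p ^ 3 with hPdef
  have hP : 8 ≤ P := by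
    calc 8 = 2 ^ 3 := by norm_num
      _ ≤ p ^ 3 := Nat.pow_le_pow_left hp 3
  have hPr : (P : ℝ) = (p : ℝ) ^ 3 := by rw [hPdef]; push_cast; rfl
  let T : ℕ → ℤ := fun j => ⌊P * Int.fract (t * (P : ℝ) ^ j)⌋
  let a : ℕ → ℕ := fun j => if T j ≤ 3 then 5 else 1
  let s : ℝ := dser P (fun i => a i)
  have ha : ∀ i, a i ≤ 5 := fun i => by simp only [a]; split_ifs <;> norm_num
  have hirr : ∀ q : ℕ, Irrational (Real.log q / Real.log p) →
      Irrational (Real.log q / Real.log P) := by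
    intro q h
    have e : Real.log q / Real.log P = (Real.log q / Real.log p) / (3 : ℕ) := by
      rw [hPr, Real.log_pow]; push_cast; rw [div_div, mul_comm]
    rw [e]
    exact h.div_natCast (by norm_num)
  have key : ∀ (b : ℝ) (ε : ℤ), ε ≠ 0 → ∀ᵐ ω ∂bits, ∀ q : ℕ, 2 ≤ q →
      Irrational (Real.log q / Real.log p) → ∀ h : ℤ, h ≠ 0 →
      Tendsto (fun N : ℕ => (∑ n ∈ Finset.range N, ee (h * b * (q : ℝ) ^ n) *
        ee (((h * ε : ℤ) * (q : ℝ) ^ n) * wpt P ω)) / (N : ℂ)) atTop (𝓝 0) := by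
    intro b ε hε
    rw [ae_all_iff]; intro q
    by_cases hq : 2 ≤ q
    swap
    · exact Eventually.of_forall fun ω h => absurd h hq
    by_cases hi : Irrational (Real.log q / Real.log p)
    swap
    · exact Eventually.of_forall fun ω _ h => absurd h hi
    have : ∀ᵐ ω ∂bits, ∀ h : ℤ, h ≠ 0 →
      Tendsto (fun N : ℕ => (∑ n ∈ Finset.range N, ee (h * b * (q : ℝ) ^ n) *
        ee (((h * ε : ℤ) * (q : ℝ) ^ n) * wpt P ω)) / (N : ℂ)) atTop (𝓝 0) := by
      rw [ae_all_iff]; intro h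
      by_cases hh : h = 0
      · exact Eventually.of_forall fun ω h => absurd hh h
      filter_upwards [main_ae P (by omega) q hq (hirr q hi) (h * ε) (mul_ne_zero hh hε)
        (fun n => ee (h * b * (q : ℝ) ^ n)) (fun n => ee_norm _)] with ω hω _
      exact hω
    filter_upwards [this] with ω hω _ _
    exact hω
  obtain ⟨ω, h1, h2⟩ := ((key s 1 (by norm_num)).and (key (t - s) (-1) (by norm_num))).exists
  let d : ℕ → ℕ := fun j => a j + (if ω j then 1 else 0)
  have hd6 : ∀ j, d j ≤ 6 := fun j => by
    have := ha j
    simp only [d]; split_ifs <;> omega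
  have hd1 : ∀ j, 1 ≤ d j := fun j => by
    simp only [d, a]; split_ifs <;> omega
  have hdT : ∀ j, (d j : ℤ) + 2 ≤ T j ∨ T j + 1 ≤ (d j : ℤ) := fun j => by
    simp only [d, a]; split_ifs <;> push_cast <;> omega
  have hsw : dser P (fun i => d i) = s + wpt P ω := by
    have := (dser_summable P hP (fun i => (a i : ℝ)) (fun i => by positivity)
      (fun i => by have := ha i; exact_mod_cast (by omega : a i ≤ 6))).tsum_add
      (wpt_summable P (by omega) ω)
    simp only [s, dser, wpt]
    rw [← this]
    refine tsum_congr fun i => ?_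
    rw [← add_mul]
    congr 1
    simp only [d, bv]
    split_ifs <;> simp_all
  set w := wpt P ω with hw
  let u : ℝ := Int.fract (s + w)
  let v : ℝ := Int.fract (t - u)
  have hu : u = s + w + ((-⌊s + w⌋ : ℤ) : ℝ) := by
    simp only [u, Int.fract]; push_cast; ring
  have hv : v = t - (s + w) + ((⌊s + w⌋ - ⌊t - u⌋ : ℤ) : ℝ) := by
    have : v = t - u - ⌊t - u⌋ := rfl
    rw [this]
    push_cast
    have : u = s + w - ⌊s + w⌋ := rfl
    linarith
  have hu0 : 0 ≤ u := Int.fract_nonneg _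
  have hv0 : 0 ≤ v := Int.fract_nonneg _
  refine ⟨u, ⟨⟨hu0, Int.fract_lt_one _⟩, ?_, ?_⟩, v, ⟨⟨hv0, Int.fract_lt_one _⟩, ?_, ?_⟩, ?_⟩
  · intro q hq hi
    refine isNormal_of_weyl q hq u hu0 fun h hh => ?_
    exact weyl_of_main q s w u 1 (-⌊s + w⌋) (by rw [hu]; push_cast; ring) h (h1 q hq hi h hh)
  · refine not_isNormal_of_gap p hp u hu0 fun j => ?_
    rw [← hPr]
    exact gap_u P hP d hd6 hd1 j u _ (by rw [hsw]; exact hu)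
  · intro q hq hi
    refine isNormal_of_weyl q hq v hv0 fun h hh => ?_
    exact weyl_of_main q (t - s) w v (-1) (⌊s + w⌋ - ⌊t - u⌋)
      (by rw [hv]; push_cast; ring) h (h2 q hq hi h hh)
  · refine not_isNormal_of_gap p hp v hv0 fun j => ?_
    rw [← hPr]
    exact gap_v P hP t d hd6 hdT j v _ (by rw [hsw]; exact hv)
  · rw [Int.fract_eq_iff]
    refine ⟨ht.1, ht.2, -⌊t - u⌋, ?_⟩
    have : v = t - u - ⌊t - u⌋ := rfl
    rw [this]; push_cast; ring
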